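/- arXiv:1705.09615 — 4 statements merged into one kernel-verified Lean document; each statement's English description precedes it below -/
import Mathlib

section
/- Let S be a schema and let σ be a finite prefix of a complete path of S (σ ∈ pre(Π(S))). Then the set {m ∈ Λ(S) : σm ∈ pre(Π(S))} of one-letter extensions of σ is exactly one of the following: a singleton containing an assignment letter; a pair {⟨p^(l),true⟩, ⟨p^(l),false⟩} for some labelled predicate p^(l) of S; or the empty set. Moreover, if σ ∈ Π(S) then this set is empty (so no word of Π(S) is a strict prefix of another). -/
/-!
Call two words *compatible* if they are equal or first differ at a position where they carry the
letters `⟨p^(l), b⟩` and `⟨p^(l), ¬b⟩` of one predicate occurrence. In particular a word is never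
compatible with a strict extension of itself. Structural induction on the schema gives three facts:
`Π(S)` is nonempty (`paths_nonempty`), any two words of `Π(S)` are compatible (`compat_paths`),
and `Π(S)` is *branching* (`branching_paths`): whenever a word of `Π(S)` passes through
`⟨p^(l), b⟩` after a prefix `c`, some word of `Π(S)` passes through `⟨p^(l), ¬b⟩` after `c`.

Compatibility bounds the one-letter extensions of `σ` from above: two of them are equal or are the
two letters of one predicate. Branching provides the other letter of a predicate.
Compatibility of a complete path with its extensions shows that a complete path has none.
Nonemptiness is what allows a run to switch to the other part of an `if`, or to enter the body of a
`while` loop instead of exiting.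
-/

/-!
Common formalization of program schemas (Danicic–Hierons–Laurence):
letters/paths, Herbrand semantics, freeness, liberality, subschemas,
data/control dependence, Weiser's set `Need`, slices and couples.
Function symbols, predicate symbols, variables and labels are all
modelled by `ℕ` (function and predicate symbols kept disjoint by
construction of the syntax).
-/

namespace SchemaSlicing

/-- Letters of the alphabet Λ(S): assignment letters `y := f^(l)(args)` and
predicate letters `⟨p^(l)(args), b⟩`. -/
inductive Letter : Type
  | asn (y : ℕ) (f : ℕ) (l : ℕ) (args : List ℕ)
  | prd (p : ℕ) (l : ℕ) (args : List ℕ) (b : Bool)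
  deriving DecidableEq

/-- Program schemas. -/
inductive Schema : Type
  | skip
  | assign (y : ℕ) (f : ℕ) (l : ℕ) (args : List ℕ)
  | seq (S₁ S₂ : Schema)
  | ite (p : ℕ) (l : ℕ) (args : List ℕ) (Tt Tf : Schema)
  | whil (p : ℕ) (l : ℕ) (args : List ℕ) (body : Schema)

/-- Complete paths of a while loop iterated `n` times. -/
def whileIter (p l : ℕ) (args : List ℕ) (B : Set (List Letter)) : ℕ → Set (List Letter)
  | 0 => {[Letter.prd p l args false]}
  | n + 1 => {σ | ∃ x ∈ B, ∃ y ∈ whileIter p l args B n, σ = Letter.prd p l args true :: (x ++ y)}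

/-- The set Π(S) of complete paths through a schema. -/
def Paths : Schema → Set (List Letter)
  | .skip => {[]}
  | .assign y f l args => {[Letter.asn y f l args]}
  | .seq S₁ S₂ => {σ | ∃ x ∈ Paths S₁, ∃ y ∈ Paths S₂, σ = x ++ y}
  | .ite p l args Tt Tf =>
      {σ | (∃ x ∈ Paths Tt, σ = Letter.prd p l args true :: x) ∨
           (∃ x ∈ Paths Tf, σ = Letter.prd p l args false :: x)}
  | .whil p l args body => {σ | ∃ n, σ ∈ whileIter p l args (Paths body) n}

/-- pre(Π(S)): finite prefixes of complete paths. -/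
def PrePaths (S : Schema) : Set (List Letter) := {σ | ∃ τ, σ <+: τ ∧ τ ∈ Paths S}

/-- μ is a path-segment of S. -/
def PathSegment (S : Schema) (μ : List Letter) : Prop := ∃ a b, a ++ μ ++ b ∈ Paths S

/-- μ is a terminal path-segment of S. -/
def TerminalSegment (S : Schema) (μ : List Letter) : Prop := ∃ a, a ++ μ ∈ Paths S

/-- An interpretation over a domain `D`. -/
structure Interp (D : Type) where
  fn : ℕ → List D → D
  pr : ℕ → List D → Bool

/-- One execution step on states. -/
def stepL {D : Type} (I : Interp D) (d : ℕ → D) : Letter → (ℕ → D)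
  | .asn y f _ args => Function.update d y (I.fn f (args.map d))
  | .prd _ _ _ _ => d

/-- `M[σ]^I_d`: the state after executing the assignment letters of σ from d. -/
def execP {D : Type} (I : Interp D) (d : ℕ → D) (σ : List Letter) : ℕ → D :=
  σ.foldl (stepL I) d

/-- σ is consistent with the interpretation `I` from initial state `d`:
every predicate letter along σ is evaluated according to `I`. -/
def Agrees {D : Type} (I : Interp D) (d : ℕ → D) (σ : List Letter) : Prop :=
  ∀ τ p l args b, τ ++ [Letter.prd p l args b] <+: σ →
    I.pr p (args.map (execP I d τ)) = b

/-- σ is the (terminating) path `π_S(I,d)`. -/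
def TermRun {D : Type} (S : Schema) (I : Interp D) (d : ℕ → D) (σ : List Letter) : Prop :=
  σ ∈ Paths S ∧ Agrees I d σ

/-- `M[S]^I_d ≠ ⊥`. -/
def Terminates {D : Type} (S : Schema) (I : Interp D) (d : ℕ → D) : Prop :=
  ∃ σ, TermRun S I d σ

/-- Terms over function symbols and variables (the Herbrand domain). -/
inductive Trm : Type
  | var : ℕ → Trm
  | app : ℕ → List Trm → Trm

/-- A Herbrand interpretation is determined by its predicate part. -/
abbrev HInterp := ℕ → List Trm → Bool

/-- The Herbrand interpretation with predicate part `h`. -/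
def herb (h : HInterp) : Interp Trm := ⟨Trm.app, h⟩

/-- The natural state `e`. -/
def eSt : ℕ → Trm := Trm.var

/-- `M[σ]_e`: Herbrand execution of the assignment letters of σ from e. -/
def hexec (σ : List Letter) : ℕ → Trm := execP (herb fun _ _ => false) eSt σ

/-- σ is consistent with the Herbrand interpretation `i` from `e`. -/
def hAgrees (i : HInterp) (σ : List Letter) : Prop := Agrees (herb i) eSt σ

/-- A schema is free if every prefix of a complete path is a prefix of
`π_S(i,e)` for some Herbrand interpretation i. -/
def Free (S : Schema) : Prop := ∀ σ ∈ PrePaths S, ∃ i : HInterp, hAgrees i σ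

/-- A schema is liberal if along any executable path (from `e`, under a
Herbrand interpretation) no two assignments produce the same term. -/
def Liberal (S : Schema) : Prop :=
  ∀ (i : HInterp) (μ ν : List Letter) (y f l args w g m brgs),
    (μ ++ Letter.asn y f l args :: (ν ++ [Letter.asn w g m brgs])) ∈ PrePaths S →
    hAgrees i (μ ++ Letter.asn y f l args :: (ν ++ [Letter.asn w g m brgs])) →
    hexec (μ ++ [Letter.asn y f l args]) y ≠
      hexec (μ ++ Letter.asn y f l args :: (ν ++ [Letter.asn w g m brgs])) w

/-- Labelled symbols: labelled function symbols and labelled predicate symbols. -/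
inductive LSym : Type
  | fn (f l : ℕ)
  | pr (p l : ℕ)
  deriving DecidableEq

/-- The set of labelled symbols occurring in a schema. -/
def lsymSet : Schema → Set LSym
  | .skip => ∅
  | .assign _ f l _ => {LSym.fn f l}
  | .seq a b => lsymSet a ∪ lsymSet b
  | .ite p l _ t e => insert (LSym.pr p l) (lsymSet t ∪ lsymSet e)
  | .whil p l _ b => insert (LSym.pr p l) (lsymSet b)

/-- Number of occurrences of a labelled symbol in a schema. -/
def lsymCount : Schema → LSym → ℕ
  | .skip, _ => 0
  | .assign _ f l _, x => if x = LSym.fn f l then 1 else 0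
  | .seq a b, x => lsymCount a x + lsymCount b x
  | .ite p l _ t e, x => (if x = LSym.pr p l then 1 else 0) + lsymCount t x + lsymCount e x
  | .whil p l _ b, x => (if x = LSym.pr p l then 1 else 0) + lsymCount b x

/-- Standing convention: distinct occurrences of the same symbol carry distinct labels. -/
def WellLabelled (S : Schema) : Prop := ∀ x, lsymCount S x ≤ 1

/-- Number of occurrences of a predicate symbol in a schema. -/
def predCount : Schema → ℕ → ℕ
  | .skip, _ => 0
  | .assign _ _ _ _, _ => 0
  | .seq a b, p => predCount a p + predCount b p
  | .ite q _ _ t e, p => (if q = p then 1 else 0) + predCount t p + predCount e p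
  | .whil q _ _ b, p => (if q = p then 1 else 0) + predCount b p

/-- No predicate symbol occurs more than once. -/
def PredLinear (S : Schema) : Prop := ∀ p, predCount S p ≤ 1

/-- `Occurs T S`: T occurs as a subtree (statement) of S. -/
inductive Occurs : Schema → Schema → Prop
  | refl (S : Schema) : Occurs S S
  | seqL {S T U : Schema} : Occurs S T → Occurs S (.seq T U)
  | seqR {S T U : Schema} : Occurs S U → Occurs S (.seq T U)
  | iteT {S t e : Schema} {p l args} : Occurs S t → Occurs S (.ite p l args t e)
  | iteF {S t e : Schema} {p l args} : Occurs S e → Occurs S (.ite p l args t e)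
  | whilB {S b : Schema} {p l args} : Occurs S b → Occurs S (.whil p l args b)

/-- The schema contains an assignment to the variable v. -/
def AssignsTo : Schema → ℕ → Prop
  | .skip, _ => False
  | .assign y _ _ _, v => y = v
  | .seq a b, v => AssignsTo a v ∨ AssignsTo b v
  | .ite _ _ _ t e, v => AssignsTo t v ∨ AssignsTo e v
  | .whil _ _ _ b, v => AssignsTo b v

/-- The schema contains an assignment `v := f(...)`. -/
def AssignsWith : Schema → ℕ → ℕ → Prop
  | .skip, _, _ => False
  | .assign y g _ _, f, v => g = f ∧ y = v
  | .seq a b, f, v => AssignsWith a f v ∨ AssignsWith b f v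
  | .ite _ _ _ t e, f, v => AssignsWith t f v ∨ AssignsWith e f v
  | .whil _ _ _ b, f, v => AssignsWith b f v

/-- If a function symbol occurs in assignments in both parts of an if
predicate, then those assignments assign to distinct variables. -/
def IfPartsCondition (S : Schema) : Prop :=
  ∀ p l args t e, Occurs (Schema.ite p l args t e) S →
    ∀ f v, AssignsWith t f v → AssignsWith e f v → False

/-- Special schemas: (well-labelled,) predicate-linear, free, liberal,
satisfying the condition on the two parts of each if predicate. -/
def Special (S : Schema) : Prop :=
  WellLabelled S ∧ PredLinear S ∧ Free S ∧ Liberal S ∧ IfPartsCondition S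

/-- `Subschema T S`: T is obtained from S by deleting statements. -/
inductive Subschema : Schema → Schema → Prop
  | skip (S : Schema) : Subschema .skip S
  | refl (S : Schema) : Subschema S S
  | seqL (S₁ S₂ : Schema) : Subschema S₁ (.seq S₁ S₂)
  | seqR (S₁ S₂ : Schema) : Subschema S₂ (.seq S₁ S₂)
  | seqCongrL {S' S : Schema} (T : Schema) :
      Subschema S' S → Subschema (.seq S' T) (.seq S T)
  | seqCongrR {T' T : Schema} (S : Schema) :
      Subschema T' T → Subschema (.seq S T') (.seq S T)
  | whilCongr {T' T : Schema} (p l : ℕ) (args : List ℕ) :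
      Subschema T' T → Subschema (.whil p l args T') (.whil p l args T)
  | iteCongrT {T' T : Schema} (p l : ℕ) (args : List ℕ) (E : Schema) :
      Subschema T' T → Subschema (.ite p l args T' E) (.ite p l args T E)
  | iteCongrF {E' E : Schema} (p l : ℕ) (args : List ℕ) (T : Schema) :
      Subschema E' E → Subschema (.ite p l args T E') (.ite p l args T E)
  | trans {A B C : Schema} : Subschema A B → Subschema B C → Subschema A C

/-- T is a u-slice of S (u a variable): over every domain, state and
interpretation, if S terminates then T terminates with the same final value of u. -/
def IsUSlice (S T : Schema) (u : ℕ) : Prop :=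
  ∀ (D : Type) (I : Interp D) (d : ℕ → D),
    Terminates S I d →
      Terminates T I d ∧
      ∀ σ τ, TermRun S I d σ → TermRun T I d τ → execP I d σ u = execP I d τ u

/-- T is an ω-slice of S: S and T have the same termination behaviour. -/
def IsOmegaSlice (S T : Schema) : Prop :=
  ∀ (D : Type) (I : Interp D) (d : ℕ → D), Terminates S I d ↔ Terminates T I d

/-- `IsFTrm F t`: t is an F-term, for a (nonempty) word F of function symbols. -/
inductive IsFTrm : List ℕ → Trm → Prop
  | base (f : ℕ) (ts : List Trm) : IsFTrm [f] (.app f ts)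
  | step {F : List ℕ} {t : Trm} (g : ℕ) {ts : List Trm} :
      t ∈ ts → IsFTrm F t → IsFTrm (F ++ [g]) (.app g ts)

/-- `IsVFTrm v F t`: t is a vF-term. -/
inductive IsVFTrm (v : ℕ) : List ℕ → Trm → Prop
  | base : IsVFTrm v [] (.var v)
  | step {F : List ℕ} {t : Trm} (g : ℕ) {ts : List Trm} :
      t ∈ ts → IsVFTrm v F t → IsVFTrm v (F ++ [g]) (.app g ts)

/-- The function symbol f occurs in the term t. -/
inductive OccIn (f : ℕ) : Trm → Prop
  | here (ts : List Trm) : OccIn f (.app f ts)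
  | there {g : ℕ} {ts : List Trm} {t : Trm} : t ∈ ts → OccIn f t → OccIn f (.app g ts)

/-- Labelled terms: applications additionally record the label of the
assignment that created them. -/
inductive LTrm : Type
  | var : ℕ → LTrm
  | app : ℕ → ℕ → List LTrm → LTrm

def lStep (d : ℕ → LTrm) : Letter → (ℕ → LTrm)
  | .asn y f l args => Function.update d y (LTrm.app f l (args.map d))
  | .prd _ _ _ _ => d

/-- Labelled Herbrand execution from e. -/
def lexec (σ : List Letter) : ℕ → LTrm := σ.foldl lStep LTrm.var

/-- F-terms for words F of labelled function symbols. -/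
inductive IsFLTrm : List (ℕ × ℕ) → LTrm → Prop
  | base (f l : ℕ) (ts : List LTrm) : IsFLTrm [(f, l)] (.app f l ts)
  | step {F : List (ℕ × ℕ)} {t : LTrm} (g m : ℕ) {ts : List LTrm} :
      t ∈ ts → IsFLTrm F t → IsFLTrm (F ++ [(g, m)]) (.app g m ts)

/-- `f^(l) ⤳ u` for a variable u. -/
def DepFV (S : Schema) (fl : ℕ × ℕ) (u : ℕ) : Prop :=
  ∃ σ, TerminalSegment S σ ∧ IsFLTrm [fl] (lexec σ u)

/-- `f^(l) ⤳ g^(m)` for labelled function symbols. -/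
def DepFF (S : Schema) (fl gm : ℕ × ℕ) : Prop :=
  ∃ σ, PathSegment S σ ∧ ∃ w, IsFLTrm [fl, gm] (lexec σ w)

/-- `f^(l) ⤳ q^(m)` for a labelled predicate. -/
def DepFP (S : Schema) (fl : ℕ × ℕ) (q m : ℕ) : Prop :=
  ∃ σ args Z, PathSegment S (σ ++ [Letter.prd q m args Z]) ∧
    ∃ w ∈ args, IsFLTrm [fl] (lexec σ w)

/-- `f^(l) ⤳ x` for a labelled symbol x. -/
def DepFX (S : Schema) (fl : ℕ × ℕ) : LSym → Prop
  | .fn g m => DepFF S fl (g, m)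
  | .pr q m => DepFP S fl q m

/-- The labelled predicate `p^(l)` controls the labelled symbol x in S. -/
def ControlsL (S : Schema) (p l : ℕ) (x : LSym) : Prop :=
  (∃ args t e, Occurs (Schema.ite p l args t e) S ∧ (x ∈ lsymSet t ∨ x ∈ lsymSet e)) ∨
  (∃ args b, Occurs (Schema.whil p l args b) S ∧ x ∈ lsymSet b)

/-- `p^(l)` is a while predicate of S. -/
def IsWhilePred (S : Schema) (p l : ℕ) : Prop :=
  ∃ args b, Occurs (Schema.whil p l args b) S

/-- Slicing criteria: a variable, or termination (ω). -/
inductive Crit : Type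
  | var : ℕ → Crit
  | omega

/-- Weiser's labelled symbol set `Need_S(u)`. -/
inductive Need (S : Schema) : Crit → LSym → Prop
  | ofVar {v f l : ℕ} : DepFV S (f, l) v → Need S (.var v) (.fn f l)
  | ofOmega {p l : ℕ} : IsWhilePred S p l → Need S .omega (.pr p l)
  | ofDep {u : Crit} {f l : ℕ} {x : LSym} :
      Need S u x → DepFX S (f, l) x → Need S u (.fn f l)
  | ofControl {u : Crit} {p l : ℕ} {x : LSym} :
      Need S u x → ControlsL S p l x → Need S u (.pr p l)

/-- `{i,j}` is a p(ts)-couple: i and j differ at the predicate term p(ts)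
and agree on every other predicate term. -/
def PTCouple (p : ℕ) (ts : List Trm) (i j : HInterp) : Prop :=
  i p ts ≠ j p ts ∧ ∀ q ss, (q, ss) ≠ (p, ts) → i q ss = j q ss

/-- `{i,j}` is a p(ts)u-couple for S. -/
def PTUCouple (S : Schema) (p : ℕ) (ts : List Trm) (u : ℕ) (i j : HInterp) : Prop :=
  PTCouple p ts i j ∧
  ∃ σ τ, TermRun S (herb i) eSt σ ∧ TermRun S (herb j) eSt τ ∧ hexec σ u ≠ hexec τ u

/-- `{i,j}` is a pu-couple for S. -/
def PUCouple (S : Schema) (p u : ℕ) (i j : HInterp) : Prop :=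
  ∃ ts, PTUCouple S p ts u i j

/-- `{i,j}` is a pω-couple for S: a p-couple such that exactly one of the
two runs terminates. -/
def POmegaCouple (S : Schema) (p : ℕ) (i j : HInterp) : Prop :=
  ∃ ts, PTCouple p ts i j ∧
    Xor' (Terminates S (herb i) eSt) (Terminates S (herb j) eSt)

/-- A `p^(l)u`-couple for S presented with its divergence data: the common
prefix `head` (the head of the couple), the argument vector of `p^(l)` at the
divergence point, and the two tails. -/
def LPUCoupleData (S : Schema) (p l u : ℕ) (i j : HInterp)
    (head : List Letter) (args : List ℕ) (ρt ρf : List Letter) : Prop :=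
  PTCouple p (args.map (hexec head)) i j ∧
  TermRun S (herb i) eSt (head ++ Letter.prd p l args true :: ρt) ∧
  TermRun S (herb j) eSt (head ++ Letter.prd p l args false :: ρf) ∧
  hexec (head ++ Letter.prd p l args true :: ρt) u ≠
    hexec (head ++ Letter.prd p l args false :: ρf) u

/-- A (p,X)-link in S. -/
def PLink (S : Schema) (p : ℕ) (X : Bool) (ν : List Letter) : Prop :=
  (∃ l args t e, Occurs (Schema.ite p l args t e) S ∧
     ∃ π ∈ Paths (if X then t else e), ν = Letter.prd p l args X :: π) ∨
  (∃ l args b, Occurs (Schema.whil p l args b) S ∧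
     ((X = false ∧ ν = [Letter.prd p l args false]) ∨
      (X = true ∧ ∃ π ∈ Paths b, ∃ ρ ∈ Paths (Schema.whil p l args b),
        ν = Letter.prd p l args true :: (π ++ ρ))))

/-- The path-segment μ v-feeds p to q in S. -/
def VFeeds (S : Schema) (v p q : ℕ) (μ : List Letter) : Prop :=
  ∃ X ν, PLink S p X ν ∧ ∃ m args, PathSegment S (ν ++ μ ++ [Letter.prd q m args true]) ∧
    ∃ w ∈ args, ∃ F, IsVFTrm v F (hexec μ w)

/-- There is an assignment to v in the body (while) or in the true or
false part (if) of the predicate p in S. -/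
def AssignInPart (S : Schema) (p v : ℕ) : Prop :=
  (∃ l args t e, Occurs (Schema.ite p l args t e) S ∧ (AssignsTo t v ∨ AssignsTo e v)) ∨
  (∃ l args b, Occurs (Schema.whil p l args b) S ∧ AssignsTo b v)

/-- The (unlabelled) symbol of a letter (function symbols and predicate
symbols kept disjoint via a sum). -/
def symOf : Letter → Sum ℕ ℕ
  | .asn _ f _ _ => .inl f
  | .prd p _ _ _ => .inr p

/-- The labelled symbol of a letter. -/
def lsymOf : Letter → LSym
  | .asn _ f l _ => .fn f l
  | .prd p l _ _ => .pr p l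

/-- The vector of variables referenced by a letter. -/
def refsOf : Letter → List ℕ
  | .asn _ _ _ args => args
  | .prd _ _ args _ => args

/-- Statements of predicate-free schemas. -/
inductive PFStmt : Type
  | skip
  | asn (y : ℕ) (f : ℕ) (args : List ℕ)
  deriving DecidableEq

/-- A predicate-free schema is a finite sequence of skips and assignments. -/
abbrev PFS := List PFStmt

def pfStep (d : ℕ → Trm) : PFStmt → (ℕ → Trm)
  | .skip => d
  | .asn y f args => Function.update d y (Trm.app f (args.map d))

/-- Execution of a predicate-free schema from a state d. -/
def pfExecFrom (d : ℕ → Trm) (U : PFS) : ℕ → Trm := U.foldl pfStep d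

/-- `M[U]_e` for a predicate-free schema. -/
def pfExec (U : PFS) : ℕ → Trm := pfExecFrom eSt U

/-- A predicate-free schema is liberal: executed from e, no two of its
assignments produce equal term values. -/
def PFLiberal (U : PFS) : Prop :=
  ∀ A y f args B w g brgs C,
    U = A ++ PFStmt.asn y f args :: (B ++ PFStmt.asn w g brgs :: C) →
    pfExec (A ++ [PFStmt.asn y f args]) y ≠
      pfExec (A ++ PFStmt.asn y f args :: (B ++ [PFStmt.asn w g brgs])) w

end SchemaSlicing

namespace SchemaSlicing

/-! ### Compatible words and branching languages -/

/-- Two words are compatible if they are equal, or if at the first position where they differ they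
carry the two letters of one labelled predicate. -/
inductive Compat : List Letter → List Letter → Prop
  | refl (x : List Letter) : Compat x x
  | split (p l : ℕ) (args : List ℕ) (b : Bool) (u v : List Letter) :
      Compat (Letter.prd p l args b :: u) (Letter.prd p l args (!b) :: v)
  | cons (a : Letter) {x y : List Letter} : Compat x y → Compat (a :: x) (a :: y)

/-- A language is branching if after any prefix where it allows one outcome of a predicate it also
allows the other. -/
def Branching (L : Set (List Letter)) : Prop :=
  ∀ c p l args b u, c ++ Letter.prd p l args b :: u ∈ L →
    ∃ v, c ++ Letter.prd p l args (!b) :: v ∈ L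

theorem Compat.of_cons {a : Letter} {x y : List Letter} (h : Compat (a :: x) (a :: y)) :
    Compat x y := by
  generalize hX : a :: x = X at h
  generalize hY : a :: y = Y at h
  cases h with
  | refl => subst hX; simp at hY; subst hY; exact .refl _
  | split p l args b u v => cases b <;> simp_all
  | cons a h => simp_all

theorem Compat.of_append {x y : List Letter} :
    ∀ σ : List Letter, Compat (σ ++ x) (σ ++ y) → Compat x y
  | [], h => h
  | _ :: σ, h => Compat.of_append σ h.of_cons

theorem Compat.append_left {x y : List Letter} (h : Compat x y) :
    ∀ σ : List Letter, Compat (σ ++ x) (σ ++ y)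
  | [] => h
  | a :: σ => (Compat.append_left h σ).cons a

/-- If compatible words differ, what follows them is irrelevant; if they agree, compatibility is
decided by what follows. -/
theorem Compat.append {x x' y y' : List Letter} (h : Compat x x') (h' : Compat y y') :
    Compat (x ++ y) (x' ++ y') := by
  induction h with
  | refl x => exact h'.append_left x
  | split p l args b u v => exact .split p l args b _ _
  | cons a _ ih => exact ih.cons a

theorem Compat.head {m m' : Letter} {τ τ' : List Letter} (h : Compat (m :: τ) (m' :: τ')) :
    m = m' ∨ ∃ p l args b, m = Letter.prd p l args b ∧ m' = Letter.prd p l args (!b) := by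
  cases h with
  | refl => exact .inl rfl
  | split p l args b => exact .inr ⟨p, l, args, b, rfl, rfl⟩
  | cons => exact .inl rfl

/-! ### Complete paths are pairwise compatible -/

theorem paths_nonempty (S : Schema) : (Paths S).Nonempty := by
  induction S with
  | skip => exact ⟨[], rfl⟩
  | assign y f l args => exact ⟨_, rfl⟩
  | seq S₁ S₂ ih₁ ih₂ =>
    obtain ⟨x, hx⟩ := ih₁
    obtain ⟨y, hy⟩ := ih₂
    exact ⟨x ++ y, x, hx, y, hy, rfl⟩
  | ite p l args Tt Tf iht _ =>
    obtain ⟨x, hx⟩ := iht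
    exact ⟨_, .inl ⟨x, hx, rfl⟩⟩
  | whil p l args body _ => exact ⟨_, 0, rfl⟩

theorem compat_whileIter (p l : ℕ) (args : List ℕ) {B : Set (List Letter)}
    (hB : ∀ x ∈ B, ∀ y ∈ B, Compat x y) (n : ℕ) :
    ∀ m, ∀ x ∈ whileIter p l args B n, ∀ y ∈ whileIter p l args B m, Compat x y := by
  induction n with
  | zero =>
    rintro (_ | m) x hx y hy
    · obtain rfl : x = _ := hx
      obtain rfl : y = _ := hy
      exact .refl _
    · obtain rfl : x = _ := hx
      obtain ⟨_, _, _, _, rfl⟩ := hy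
      exact .split p l args false _ _
  | succ n ih =>
    rintro (_ | m) x hx y hy
    · obtain ⟨_, _, _, _, rfl⟩ := hx
      obtain rfl : y = _ := hy
      exact .split p l args true _ _
    · obtain ⟨x₁, hx₁, x₂, hx₂, rfl⟩ := hx
      obtain ⟨y₁, hy₁, y₂, hy₂, rfl⟩ := hy
      exact ((hB _ hx₁ _ hy₁).append (ih m _ hx₂ _ hy₂)).cons _

theorem compat_paths (S : Schema) : ∀ x ∈ Paths S, ∀ y ∈ Paths S, Compat x y := by
  induction S with
  | skip =>
    intro x hx y hy
    obtain rfl : x = _ := hx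
    obtain rfl : y = _ := hy
    exact .refl _
  | assign _ f l args =>
    intro x hx y hy
    obtain rfl : x = _ := hx
    obtain rfl : y = _ := hy
    exact .refl _
  | seq S₁ S₂ ih₁ ih₂ =>
    rintro _ ⟨x₁, hx₁, x₂, hx₂, rfl⟩ _ ⟨y₁, hy₁, y₂, hy₂, rfl⟩
    exact (ih₁ _ hx₁ _ hy₁).append (ih₂ _ hx₂ _ hy₂)
  | ite p l args Tt Tf iht ihf =>
    rintro _ (⟨x, hx, rfl⟩ | ⟨x, hx, rfl⟩) _ (⟨y, hy, rfl⟩ | ⟨y, hy, rfl⟩)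
    · exact (iht _ hx _ hy).cons _
    · exact .split p l args true _ _
    · exact .split p l args false _ _
    · exact (ihf _ hx _ hy).cons _
  | whil p l args body ih =>
    rintro x ⟨n, hx⟩ y ⟨m, hy⟩
    exact compat_whileIter p l args ih n m x hx y hy

/-! ### Path languages are branching -/

/-- Branching inside a concatenation `x ++ y`: the predicate letter lies in `x` or in `y`, and the
branch is taken in the corresponding language, here `A` or `B`. -/
theorem branching_append {A B : Set (List Letter)} (hA : Branching A) {x y : List Letter}
    (hx : x ∈ A) (hy : y ∈ B) {c u : List Letter} {p l : ℕ} {args : List ℕ} {b : Bool}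
    (hB : ∀ c', c' ++ Letter.prd p l args b :: u = y →
      ∃ v, c' ++ Letter.prd p l args (!b) :: v ∈ B)
    (h : c ++ Letter.prd p l args b :: u = x ++ y) :
    ∃ x' ∈ A, ∃ y' ∈ B, ∃ v, c ++ Letter.prd p l args (!b) :: v = x' ++ y' := by
  rcases List.append_eq_append_iff.1 h with ⟨d, rfl, hd⟩ | ⟨d, rfl, hd⟩
  · rcases d with _ | ⟨a, d⟩
    · obtain ⟨v, hv⟩ := hB [] (by simpa using hd)
      exact ⟨_, hx, _, hv, v, by simp⟩
    · obtain ⟨rfl, rfl⟩ := List.cons.inj (by simpa using hd)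
      obtain ⟨v, hv⟩ := hA c p l args b d hx
      exact ⟨_, hv, y, hy, v ++ y, by simp⟩
  · obtain ⟨v, hv⟩ := hB d hd.symm
    exact ⟨x, hx, _, hv, v, by simp⟩

theorem branching_whileIter (p l : ℕ) (args : List ℕ) {B : Set (List Letter)}
    (hne : B.Nonempty) (hB : Branching B) (n : ℕ) :
    ∀ c q k args' b u, c ++ Letter.prd q k args' b :: u ∈ whileIter p l args B n →
      ∃ v m, c ++ Letter.prd q k args' (!b) :: v ∈ whileIter p l args B m := by
  induction n with
  | zero =>
    intro c q k args' b u h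
    obtain ⟨x, hx⟩ := hne
    have h' : c ++ Letter.prd q k args' b :: u = [Letter.prd p l args false] := h
    rcases c with _ | ⟨a, c⟩
    · simp only [List.nil_append, List.cons.injEq, Letter.prd.injEq] at h'
      obtain ⟨⟨rfl, rfl, rfl, rfl⟩, rfl⟩ := h'
      -- instead of leaving the loop, run the body once and then leave it
      exact ⟨_, 1, x, hx, _, rfl, rfl⟩
    · simp at h'
  | succ n ih =>
    rintro c q k args' b u ⟨x, hx, y, hy, h⟩
    rcases c with _ | ⟨a, c⟩
    · simp only [List.nil_append, List.cons.injEq, Letter.prd.injEq] at h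
      obtain ⟨⟨rfl, rfl, rfl, rfl⟩, rfl⟩ := h
      exact ⟨[], 0, rfl⟩
    · simp only [List.cons_append, List.cons.injEq] at h
      obtain ⟨rfl, h⟩ := h
      obtain ⟨x', hx', y', ⟨m, hy'⟩, v, hv⟩ := branching_append
        (B := {σ | ∃ m, σ ∈ whileIter p l args B m}) hB hx ⟨n, hy⟩
        (fun c' hc' => ih c' q k args' b u (hc' ▸ hy)) h
      exact ⟨v, m + 1, x', hx', y', hy', by rw [← hv]; rfl⟩

theorem branching_paths (S : Schema) : Branching (Paths S) := by
  induction S with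
  | skip =>
    intro c p l args b u h
    have h' : c ++ Letter.prd p l args b :: u = [] := h
    simp at h'
  | assign y f k args' =>
    intro c p l args b u h
    have h' : c ++ Letter.prd p l args b :: u = [Letter.asn y f k args'] := h
    rcases c with _ | ⟨a, c⟩ <;> simp at h'
  | seq S₁ S₂ ih₁ ih₂ =>
    rintro c p l args b u ⟨x, hx, y, hy, h⟩
    obtain ⟨x', hx', y', hy', v, hv⟩ := branching_append ih₁ hx hy
      (fun c' hc' => ih₂ c' p l args b u (hc' ▸ hy)) h
    exact ⟨v, x', hx', y', hy', hv⟩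
  | ite q k args' Tt Tf iht ihf =>
    intro c p l args b u h
    rcases c with _ | ⟨a, c⟩
    · rcases h with ⟨x, hx, h⟩ | ⟨x, hx, h⟩
      · simp only [List.nil_append, List.cons.injEq, Letter.prd.injEq] at h
        obtain ⟨⟨rfl, rfl, rfl, rfl⟩, rfl⟩ := h
        obtain ⟨v, hv⟩ := paths_nonempty Tf
        exact ⟨v, .inr ⟨v, hv, rfl⟩⟩
      · simp only [List.nil_append, List.cons.injEq, Letter.prd.injEq] at h
        obtain ⟨⟨rfl, rfl, rfl, rfl⟩, rfl⟩ := h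
        obtain ⟨v, hv⟩ := paths_nonempty Tt
        exact ⟨v, .inl ⟨v, hv, rfl⟩⟩
    · rcases h with ⟨x, hx, h⟩ | ⟨x, hx, h⟩
      · simp only [List.cons_append, List.cons.injEq] at h
        obtain ⟨rfl, rfl⟩ := h
        obtain ⟨v, hv⟩ := iht _ _ _ _ _ _ hx
        exact ⟨v, .inl ⟨_, hv, rfl⟩⟩
      · simp only [List.cons_append, List.cons.injEq] at h
        obtain ⟨rfl, rfl⟩ := h
        obtain ⟨v, hv⟩ := ihf _ _ _ _ _ _ hx
        exact ⟨v, .inr ⟨_, hv, rfl⟩⟩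
  | whil p l args body ih =>
    rintro c q k args' b u ⟨n, h⟩
    exact branching_whileIter p l args (paths_nonempty body) ih n c q k args' b u h

/-! ### One-letter extensions -/

theorem append_singleton_mem_prePaths {S : Schema} {σ : List Letter} {m : Letter} :
    σ ++ [m] ∈ PrePaths S ↔ ∃ τ, σ ++ m :: τ ∈ Paths S := by
  constructor
  · rintro ⟨_, ⟨τ, rfl⟩, h⟩
    exact ⟨τ, by simpa using h⟩
  · rintro ⟨τ, h⟩
    exact ⟨_, ⟨τ, by simp⟩, h⟩

/-- Lemma 1 / exe.lem: the set of one-letter extensions of a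
prefix of a complete path is a singleton assignment letter, a pair of
predicate letters `{⟨p^(l),true⟩, ⟨p^(l),false⟩}`, or empty; and it is empty
whenever the prefix is itself a complete path. -/
theorem extension_set_trichotomy (S : Schema) (σ : List Letter) (h : σ ∈ PrePaths S) :
    ((∃ y f l args, {m : Letter | σ ++ [m] ∈ PrePaths S} = {Letter.asn y f l args}) ∨
     (∃ p l args, {m : Letter | σ ++ [m] ∈ PrePaths S} =
        {Letter.prd p l args true, Letter.prd p l args false}) ∨
     {m : Letter | σ ++ [m] ∈ PrePaths S} = ∅) ∧
    (σ ∈ Paths S → {m : Letter | σ ++ [m] ∈ PrePaths S} = ∅) := by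
  simp only [append_singleton_mem_prePaths]
  refine ⟨?_, ?_⟩
  · rcases Set.eq_empty_or_nonempty {m : Letter | ∃ τ, σ ++ m :: τ ∈ Paths S} with
      hE | ⟨m, τ, hm⟩
    · exact .inr (.inr hE)
    · have key : ∀ m', (∃ τ', σ ++ m' :: τ' ∈ Paths S) → m = m' ∨
          ∃ p l args b, m = Letter.prd p l args b ∧ m' = Letter.prd p l args (!b) := by
        rintro m' ⟨τ', hm'⟩
        exact (Compat.of_append σ (compat_paths S _ hm _ hm')).head
      cases m with
      | asn y f l args =>
        refine .inl ⟨y, f, l, args, Set.ext fun m' => ⟨fun hm' => ?_, ?_⟩⟩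
        · rcases key m' hm' with rfl | ⟨_, _, _, _, h₁, _⟩
          · rfl
          · cases h₁
        · rintro rfl
          exact ⟨τ, hm⟩
      | prd p l args b =>
        have hother := branching_paths S _ _ _ _ _ _ hm
        refine .inr (.inl ⟨p, l, args, Set.ext fun m' => ⟨fun hm' => ?_, ?_⟩⟩)
        · rcases key m' hm' with rfl | ⟨_, _, _, _, h₁, rfl⟩
          · cases b <;> simp
          · cases h₁
            cases b <;> simp
        · rintro (rfl | rfl) <;> cases b <;> first | exact ⟨τ, hm⟩ | exact hother
  · intro hσ
    refine Set.eq_empty_of_forall_notMem fun m => ?_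
    rintro ⟨τ, hm⟩
    have hc : Compat [] (m :: τ) :=
      Compat.of_append σ (by simpa using compat_paths S _ hσ _ hm)
    cases hc

end SchemaSlicing
end

section
/- Let S, T₁, T₂ be predicate-free schemas such that the concatenations ST₁ and ST₂ are both liberal, and let v₁, v₂ be variables. If M[ST₁]_e(v₁) = M[ST₂]_e(v₂), then M[T₁]_e(v₁) = M[T₂]_e(v₂). -/
namespace SchemaSlicing

theorem pfExec_concat (U : PFS) (s : PFStmt) : pfExec (U ++ [s]) = pfStep (pfExec U) s := by
  simp [pfExec, pfExecFrom]

theorem pfExec_concat_self (U : PFS) (y f : ℕ) (args : List ℕ) :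
    pfExec (U ++ [.asn y f args]) y = .app f (args.map (pfExec U)) := by
  simp [pfExec_concat, pfStep]

theorem pfExec_concat_of_ne (U : PFS) {v y : ℕ} (f : ℕ) (args : List ℕ) (h : v ≠ y) :
    pfExec (U ++ [.asn y f args]) v = pfExec U v := by
  simp [pfExec_concat, pfStep, h]

theorem pfExec_concat_skip (U : PFS) : pfExec (U ++ [.skip]) = pfExec U := by
  simp [pfExec_concat, pfStep]

theorem PFLiberal.of_append {U V : PFS} (h : PFLiberal (U ++ V)) : PFLiberal U := by
  intro A y f args B w g brgs C hU
  exact h A y f args B w g brgs (C ++ V) (by simp [hU])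

/-- A final value is either the initial variable or the value created by some assignment. -/
theorem pfExec_origin (U : PFS) (v : ℕ) :
    pfExec U v = .var v ∨ ∃ A f args C, U = A ++ PFStmt.asn v f args :: C ∧
      pfExec U v = pfExec (A ++ [PFStmt.asn v f args]) v := by
  induction U using List.reverseRecOn with
  | nil => left; rfl
  | append_singleton U s ih =>
    have lift (hs : pfExec (U ++ [s]) v = pfExec U v) :
        pfExec (U ++ [s]) v = .var v ∨ ∃ A f args C, U ++ [s] = A ++ PFStmt.asn v f args :: C ∧
          pfExec (U ++ [s]) v = pfExec (A ++ [PFStmt.asn v f args]) v := by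
      rw [hs]
      rcases ih with h | ⟨A, f, args, C, hU, h⟩
      · exact .inl h
      · exact .inr ⟨A, f, args, C ++ [s], by simp [hU], h⟩
    cases s with
    | skip => exact lift (by rw [pfExec_concat_skip])
    | asn y f args =>
      by_cases hv : v = y
      · subst hv
        exact .inr ⟨U, f, args, [], rfl, rfl⟩
      · exact lift (pfExec_concat_of_ne U f args hv)

/-- In a liberal schema, the last assignment creates a value held by no variable at any earlier
point of the execution. -/
theorem PFLiberal.ne_of_prefix {U V : PFS} {y f : ℕ} {args : List ℕ}
    (h : PFLiberal (U ++ (V ++ [.asn y f args]))) (w : ℕ) :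
    pfExec U w ≠ pfExec (U ++ (V ++ [.asn y f args])) y := by
  rcases pfExec_origin U w with hw | ⟨A, g, brgs, C, hU, hw⟩
  · rw [hw, ← List.append_assoc, pfExec_concat_self]
    simp
  · rw [hw]
    have := h A w g brgs (C ++ V) y f args [] (by simp [hU])
    simpa [hU] using this

theorem PFLiberal.injective {U : PFS} (h : PFLiberal U) : Function.Injective (pfExec U) := by
  induction U using List.reverseRecOn with
  | nil => exact fun v w hvw => by simpa [pfExec, pfExecFrom, eSt] using hvw
  | append_singleton U s ih =>
    have hinj := ih h.of_append
    cases s with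
    | skip => rwa [pfExec_concat_skip]
    | asn y f args =>
      have hne : ∀ w, pfExec U w ≠ pfExec (U ++ [.asn y f args]) y :=
        PFLiberal.ne_of_prefix (V := []) h
      intro v w hvw
      by_cases hv : v = y <;> by_cases hw : w = y
      · rw [hv, hw]
      · rw [pfExec_concat_of_ne U f args hw, hv] at hvw
        exact absurd hvw.symm (hne w)
      · rw [pfExec_concat_of_ne U f args hv, hw] at hvw
        exact absurd hvw (hne v)
      · rw [pfExec_concat_of_ne U f args hv, pfExec_concat_of_ne U f args hw] at hvw
        exact hinj hvw

/-- The case in which the first continuation is empty. -/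
theorem liberal_cancel_prefix_nil (S T : PFS) (v w : ℕ) (hT : PFLiberal (S ++ T))
    (h : pfExec S v = pfExec (S ++ T) w) : pfExec [] v = pfExec T w := by
  induction T using List.reverseRecOn with
  | nil =>
    rw [List.append_nil] at hT h
    rw [hT.injective h]
  | append_singleton T s ih =>
    have hT' : PFLiberal (S ++ T) := by
      rw [← List.append_assoc] at hT
      exact hT.of_append
    cases s with
    | skip =>
      rw [← List.append_assoc, pfExec_concat_skip] at h
      rw [pfExec_concat_skip]
      exact ih hT' h
    | asn y f args =>
      by_cases hw : w = y
      · subst hw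
        exact absurd h (hT.ne_of_prefix v)
      · rw [← List.append_assoc, pfExec_concat_of_ne _ f args hw] at h
        rw [pfExec_concat_of_ne _ f args hw]
        exact ih hT' h

theorem map_eq_map_of_imp {α β γ δ : Type*} {a : α → γ} {b : β → γ} {a' : α → δ} {b' : β → δ}
    (h : ∀ x y, a x = b y → a' x = b' y) :
    ∀ (l : List α) (m : List β), l.map a = m.map b → l.map a' = m.map b'
  | [], [], _ => rfl
  | [], _ :: _, e => by simp at e
  | _ :: _, [], e => by simp at e
  | x :: l, y :: m, e => by
    simp only [List.map_cons, List.cons.injEq] at e ⊢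
    exact ⟨h x y e.1, map_eq_map_of_imp h l m e.2⟩

/-- Proposition 2 / plonk.prop: if `S T₁` and `S T₂` are liberal
predicate-free schemas and the final values of v₁ after `S T₁` and of v₂ after
`S T₂` coincide, then so do the final values of v₁ after T₁ and of v₂ after T₂. -/
theorem liberal_cancel_prefix (S T₁ T₂ : PFS) (v₁ v₂ : ℕ)
    (h₁ : PFLiberal (S ++ T₁)) (h₂ : PFLiberal (S ++ T₂))
    (h : pfExec (S ++ T₁) v₁ = pfExec (S ++ T₂) v₂) :
    pfExec T₁ v₁ = pfExec T₂ v₂ := by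
  induction T₁ using List.reverseRecOn generalizing T₂ v₁ v₂ with
  | nil =>
    rw [List.append_nil] at h
    exact liberal_cancel_prefix_nil S T₂ v₁ v₂ h₂ h
  | append_singleton T₁ s ih₁ =>
    have h₁' : PFLiberal (S ++ T₁) := by
      rw [← List.append_assoc] at h₁
      exact h₁.of_append
    cases s with
    | skip =>
      rw [← List.append_assoc, pfExec_concat_skip] at h
      rw [pfExec_concat_skip]
      exact ih₁ T₂ v₁ v₂ h₁' h₂ h
    | asn y f args =>
      by_cases hv₁ : v₁ = y
      swap
      · rw [← List.append_assoc, pfExec_concat_of_ne _ f args hv₁] at h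
        rw [pfExec_concat_of_ne _ f args hv₁]
        exact ih₁ T₂ v₁ v₂ h₁' h₂ h
      subst hv₁
      induction T₂ using List.reverseRecOn with
      | nil =>
        rw [List.append_nil] at h
        exact absurd h.symm (h₁.ne_of_prefix v₂)
      | append_singleton T₂ s ih₂ =>
        have h₂' : PFLiberal (S ++ T₂) := by
          rw [← List.append_assoc] at h₂
          exact h₂.of_append
        cases s with
        | skip =>
          rw [← List.append_assoc S T₂, pfExec_concat_skip] at h
          rw [pfExec_concat_skip T₂]
          exact ih₂ h₂' h
        | asn z g brgs =>
          by_cases hv₂ : v₂ = z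
          · subst hv₂
            rw [← List.append_assoc, ← List.append_assoc, pfExec_concat_self,
              pfExec_concat_self, Trm.app.injEq] at h
            rw [pfExec_concat_self, pfExec_concat_self, Trm.app.injEq]
            exact ⟨h.1, map_eq_map_of_imp (fun a b => ih₁ T₂ a b h₁' h₂') _ _ h.2⟩
          · rw [← List.append_assoc S T₂, pfExec_concat_of_ne _ g brgs hv₂] at h
            rw [pfExec_concat_of_ne T₂ g brgs hv₂]
            exact ih₂ h₂' h

end SchemaSlicing
end

section
/- A schema S is both liberal and free if and only if the following holds: for every path-segment of S of the form x̃μỹ with x̃, ỹ ∈ Λ(S), symbol(x̃) = symbol(ỹ), such that no labelled symbol occurs more than once among the letters of x̃μ and no labelled symbol occurs more than once among the letters of μỹ, either x̃ and ỹ reference different vectors of variables, or the segment x̃μ contains an assignment to a variable referenced by ỹ. -/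
namespace SchemaSlicing

/-! ### Combinatorics of paths -/

theorem paths_nonempty_s2 (S : Schema) : ∃ σ, σ ∈ Paths S := by
  induction S with
  | skip => exact ⟨_, rfl⟩
  | assign y f l args => exact ⟨_, rfl⟩
  | seq A B ihA ihB =>
    obtain ⟨x, hx⟩ := ihA
    obtain ⟨y, hy⟩ := ihB
    exact ⟨_, x, hx, y, hy, rfl⟩
  | ite p l args A B ihA ihB =>
    obtain ⟨x, hx⟩ := ihA
    exact ⟨_, Or.inl ⟨x, hx, rfl⟩⟩
  | whil p l args A ih => exact ⟨_, 0, rfl⟩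

theorem whil_nil (p l : ℕ) (args : List ℕ) (B : Schema) :
    [Letter.prd p l args false] ∈ Paths (.whil p l args B) := ⟨0, rfl⟩

theorem whil_cons {p l : ℕ} {args : List ℕ} {B : Schema} {x w : List Letter}
    (hx : x ∈ Paths B) (hw : w ∈ Paths (.whil p l args B)) :
    Letter.prd p l args true :: (x ++ w) ∈ Paths (.whil p l args B) := by
  obtain ⟨n, hn⟩ := hw
  exact ⟨n + 1, x, hx, w, hn, rfl⟩

/-- A marked letter of a concatenation `a ++ b` lies either in `a` or in `b`. -/
theorem split_append {u v a b : List Letter} {z : Letter} (h : u ++ z :: v = a ++ b) :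
    (∃ r, a = u ++ z :: r ∧ v = r ++ b) ∨ (∃ r, b = r ++ z :: v ∧ u = a ++ r) := by
  rcases List.append_eq_append_iff.1 h with ⟨c, hc, hd⟩ | ⟨c, hc, hd⟩
  · cases c with
    | nil => right; exact ⟨[], by simpa using hd.symm, by simpa using hc.symm⟩
    | cons k c =>
      simp only [List.cons_append, List.cons.injEq] at hd
      obtain ⟨rfl, hd⟩ := hd
      exact Or.inl ⟨c, hc, hd⟩
  · exact Or.inr ⟨c, hd, hc⟩

/-- Position of a letter in a path of a while-schema: it is either the loop predicate, and
then what precedes it can be continued by any path of the loop, or it lies in a traversal of the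
body, and then that traversal and what follows can be replaced by any body path and any path of
the loop. -/
theorem whil_split {p l : ℕ} {args : List ℕ} {B : Schema} {u v : List Letter} {z : Letter}
    (h : u ++ z :: v ∈ Paths (.whil p l args B)) :
    ((∃ b, z = .prd p l args b) ∧ z :: v ∈ Paths (.whil p l args B) ∧
      ∀ w ∈ Paths (.whil p l args B), u ++ w ∈ Paths (.whil p l args B)) ∨
    (∃ c r s w, u = c ++ r ∧ v = s ++ w ∧ r ++ z :: s ∈ Paths B ∧
      w ∈ Paths (.whil p l args B) ∧
      ∀ x ∈ Paths B, ∀ w ∈ Paths (.whil p l args B),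
        c ++ (x ++ w) ∈ Paths (.whil p l args B)) := by
  obtain ⟨n, hn⟩ := h
  induction n generalizing u with
  | zero =>
    left
    cases u with
    | nil =>
      simp only [whileIter, List.nil_append, Set.mem_singleton_iff, List.cons.injEq] at hn
      obtain ⟨rfl, rfl⟩ := hn
      exact ⟨⟨_, rfl⟩, whil_nil _ _ _ _, fun w hw => hw⟩
    | cons k u => simp [whileIter] at hn
  | succ n ih =>
    obtain ⟨x, hx, y, hy, he⟩ := hn
    have hy' : y ∈ Paths (.whil p l args B) := ⟨n, hy⟩
    cases u with
    | nil =>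
      left
      simp only [List.nil_append, List.cons.injEq] at he
      obtain ⟨rfl, rfl⟩ := he
      exact ⟨⟨_, rfl⟩, whil_cons hx hy', fun w hw => hw⟩
    | cons k u =>
      simp only [List.cons_append, List.cons.injEq] at he
      obtain ⟨rfl, he⟩ := he
      rcases split_append he with ⟨r, rfl, rfl⟩ | ⟨r, rfl, rfl⟩
      · right
        exact ⟨[.prd p l args true], u, r, y, rfl, rfl, hx, hy',
          fun x hx w hw => whil_cons (x := x) hx hw⟩
      · rcases ih hy with ⟨hb, hz, hw⟩ | ⟨c, r', s, w, rfl, rfl, hB, hw, hall⟩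
        · left
          refine ⟨hb, hz, fun w hw' => ?_⟩
          have := whil_cons (p := p) (l := l) (args := args) hx (hw w hw')
          simpa using this
        · right
          refine ⟨Letter.prd p l args true :: (x ++ c), r', s, w, by simp, rfl, hB, hw, ?_⟩
          intro x' hx' w' hw'
          have := whil_cons (p := p) (l := l) (args := args) hx (hall x' hx' w' hw')
          simpa using this

/-- The alphabet of a schema. -/
def lettersOf : Schema → Set Letter
  | .skip => ∅
  | .assign y f l args => {Letter.asn y f l args}
  | .seq a b => lettersOf a ∪ lettersOf b
  | .ite p l args t e => {z | ∃ b, z = Letter.prd p l args b} ∪ (lettersOf t ∪ lettersOf e)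
  | .whil p l args B => {z | ∃ b, z = Letter.prd p l args b} ∪ lettersOf B

theorem mem_lettersOf {S : Schema} {σ : List Letter} {z : Letter} (hσ : σ ∈ Paths S)
    (hz : z ∈ σ) : z ∈ lettersOf S := by
  induction S generalizing σ with
  | skip => simp only [Paths, Set.mem_singleton_iff] at hσ; simp [hσ] at hz
  | assign y f l args =>
    simp only [Paths, Set.mem_singleton_iff] at hσ
    simpa [hσ, lettersOf] using hz
  | seq A B ihA ihB =>
    obtain ⟨x, hx, y, hy, rfl⟩ := hσ
    rcases List.mem_append.1 hz with h | h
    · exact Or.inl (ihA hx h)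
    · exact Or.inr (ihB hy h)
  | ite p l args A B ihA ihB =>
    rcases hσ with ⟨x, hx, rfl⟩ | ⟨x, hx, rfl⟩
    · rcases List.mem_cons.1 hz with h | h
      · exact Or.inl ⟨_, h⟩
      · exact Or.inr (Or.inl (ihA hx h))
    · rcases List.mem_cons.1 hz with h | h
      · exact Or.inl ⟨_, h⟩
      · exact Or.inr (Or.inr (ihB hx h))
  | whil p l args B ih =>
    obtain ⟨u, v, rfl⟩ := List.append_of_mem hz
    rcases whil_split hσ with ⟨hb, -⟩ | ⟨c, r, s, w, rfl, rfl, hB, -⟩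
    · exact Or.inl hb
    · exact Or.inr (ih hB (by simp))

theorem count_pos {S : Schema} {z : Letter} (hz : z ∈ lettersOf S) :
    1 ≤ lsymCount S (lsymOf z) := by
  induction S with
  | skip => exact hz.elim
  | assign y f l args =>
    obtain rfl := hz
    simp [lsymCount, lsymOf]
  | seq A B ihA ihB =>
    rcases hz with h | h
    · have := ihA h; simp only [lsymCount]; omega
    · have := ihB h; simp only [lsymCount]; omega
  | ite p l args A B ihA ihB =>
    rcases hz with ⟨b, rfl⟩ | h | h
    · simp [lsymCount, lsymOf]; omega
    · have := ihA h; simp only [lsymCount]; omega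
    · have := ihB h; simp only [lsymCount]; omega
  | whil p l args B ih =>
    rcases hz with ⟨b, rfl⟩ | h
    · simp [lsymCount, lsymOf]
    · have := ih h; simp only [lsymCount]; omega

theorem count_pos_of_path {S : Schema} {u v : List Letter} {z : Letter}
    (h : u ++ z :: v ∈ Paths S) : 1 ≤ lsymCount S (lsymOf z) :=
  count_pos (mem_lettersOf h (by simp))

theorem refs_eq {S : Schema} (hW : WellLabelled S) {z z' : Letter} (hz : z ∈ lettersOf S)
    (hz' : z' ∈ lettersOf S) (h : lsymOf z = lsymOf z') : refsOf z = refsOf z' := by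
  induction S with
  | skip => exact hz.elim
  | assign y f l args => obtain rfl := hz; obtain rfl := hz'; rfl
  | seq A B ihA ihB =>
    have hw := hW (lsymOf z)
    simp only [lsymCount] at hw
    have wA : WellLabelled A := fun x => by have := hW x; simp only [lsymCount] at this; omega
    have wB : WellLabelled B := fun x => by have := hW x; simp only [lsymCount] at this; omega
    rcases hz with hz | hz <;> rcases hz' with hz' | hz'
    · exact ihA wA hz hz'
    · have h1 := count_pos hz; have h2 := count_pos hz'; rw [← h] at h2; omega
    · have h1 := count_pos hz; have h2 := count_pos hz'; rw [← h] at h2; omega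
    · exact ihB wB hz hz'
  | ite p l args A B ihA ihB =>
    have hw := hW (lsymOf z)
    simp only [lsymCount] at hw
    have wA : WellLabelled A := fun x => by have := hW x; simp only [lsymCount] at this; omega
    have wB : WellLabelled B := fun x => by have := hW x; simp only [lsymCount] at this; omega
    rcases hz with ⟨b, rfl⟩ | hz | hz <;> rcases hz' with ⟨b', rfl⟩ | hz' | hz'
    · rfl
    · have h2 := count_pos hz'; rw [← h] at h2; simp [lsymOf] at hw h2; omega
    · have h2 := count_pos hz'; rw [← h] at h2; simp [lsymOf] at hw h2; omega
    · have h1 := count_pos hz; rw [h] at h1 hw; simp [lsymOf] at hw h1; omega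
    · exact ihA wA hz hz'
    · have h1 := count_pos hz; have h2 := count_pos hz'; rw [← h] at h2; omega
    · have h1 := count_pos hz; rw [h] at h1 hw; simp [lsymOf] at hw h1; omega
    · have h1 := count_pos hz; have h2 := count_pos hz'; rw [← h] at h2; omega
    · exact ihB wB hz hz'
  | whil p l args B ih =>
    have hw := hW (lsymOf z)
    simp only [lsymCount] at hw
    have wB : WellLabelled B := fun x => by have := hW x; simp only [lsymCount] at this; omega
    rcases hz with ⟨b, rfl⟩ | hz <;> rcases hz' with ⟨b', rfl⟩ | hz'
    · rfl
    · have h2 := count_pos hz'; rw [← h] at h2; simp [lsymOf] at hw h2; omega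
    · have h1 := count_pos hz; rw [h] at h1 hw; simp [lsymOf] at hw h1; omega
    · exact ih wB hz hz'

/-- Position of a letter in a path of an if-schema. -/
theorem ite_split {p l : ℕ} {args : List ℕ} {A B : Schema} {u v : List Letter} {z : Letter}
    (h : u ++ z :: v ∈ Paths (.ite p l args A B)) :
    (u = [] ∧ ∃ b, z = .prd p l args b) ∨
    (∃ r, u = .prd p l args true :: r ∧ r ++ z :: v ∈ Paths A) ∨
    (∃ r, u = .prd p l args false :: r ∧ r ++ z :: v ∈ Paths B) := by
  rcases h with ⟨x, hx, he⟩ | ⟨x, hx, he⟩ <;> cases u with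
  | nil =>
    simp only [List.nil_append, List.cons.injEq] at he
    exact Or.inl ⟨rfl, _, he.1⟩
  | cons k u =>
    simp only [List.cons_append, List.cons.injEq] at he
    obtain ⟨rfl, rfl⟩ := he
    simp [hx]

/-- The paths of a well-labelled schema form a local language: a path that has reached a
labelled symbol can be continued by any continuation of that labelled symbol in another path. -/
theorem exchange {S : Schema} (hW : WellLabelled S) {u v u' v' : List Letter} {z z' : Letter}
    (h : u ++ z :: v ∈ Paths S) (h' : u' ++ z' :: v' ∈ Paths S) (hz : lsymOf z = lsymOf z') :
    u ++ z' :: v' ∈ Paths S := by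
  induction S generalizing u v u' v' with
  | skip => simp [Paths] at h
  | assign y f l args =>
    simp only [Paths, Set.mem_singleton_iff, List.append_eq_singleton_iff] at h h'
    simp at h h'
    obtain ⟨rfl, rfl, rfl⟩ := h
    obtain ⟨rfl, rfl, rfl⟩ := h'
    rfl
  | seq A B ihA ihB =>
    have hw := hW (lsymOf z)
    simp only [lsymCount] at hw
    have wA : WellLabelled A := fun x => by have := hW x; simp only [lsymCount] at this; omega
    have wB : WellLabelled B := fun x => by have := hW x; simp only [lsymCount] at this; omega
    obtain ⟨x, hx, y, hy, he⟩ := h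
    obtain ⟨x', hx', y', hy', he'⟩ := h'
    rcases split_append he with ⟨r, rfl, rfl⟩ | ⟨r, rfl, rfl⟩ <;>
      rcases split_append he' with ⟨r', rfl, rfl⟩ | ⟨r', rfl, rfl⟩
    · exact ⟨_, ihA wA hx hx', y', hy', by simp⟩
    · have h1 := count_pos_of_path hx; have h2 := count_pos_of_path hy'
      rw [← hz] at h2; omega
    · have h1 := count_pos_of_path hy; have h2 := count_pos_of_path hx'
      rw [← hz] at h2; omega
    · exact ⟨x, hx, _, ihB wB hy hy', by simp⟩
  | ite p l args A B ihA ihB =>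
    have hw := hW (lsymOf z)
    simp only [lsymCount] at hw
    have wA : WellLabelled A := fun x => by have := hW x; simp only [lsymCount] at this; omega
    have wB : WellLabelled B := fun x => by have := hW x; simp only [lsymCount] at this; omega
    rcases ite_split h with ⟨rfl, b, rfl⟩ | ⟨r, rfl, hr⟩ | ⟨r, rfl, hr⟩ <;>
      rcases ite_split h' with ⟨rfl, b', rfl⟩ | ⟨r', rfl, hr'⟩ | ⟨r', rfl, hr'⟩
    · exact h'
    · have h2 := count_pos_of_path hr'; rw [← hz] at h2; simp [lsymOf] at hw h2; omega
    · have h2 := count_pos_of_path hr'; rw [← hz] at h2; simp [lsymOf] at hw h2; omega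
    · have h1 := count_pos_of_path hr; rw [hz] at h1 hw; simp [lsymOf] at hw h1; omega
    · exact Or.inl ⟨_, ihA wA hr hr', rfl⟩
    · have h1 := count_pos_of_path hr; have h2 := count_pos_of_path hr'
      rw [← hz] at h2; omega
    · have h1 := count_pos_of_path hr; rw [hz] at h1 hw; simp [lsymOf] at hw h1; omega
    · have h1 := count_pos_of_path hr; have h2 := count_pos_of_path hr'
      rw [← hz] at h2; omega
    · exact Or.inr ⟨_, ihB wB hr hr', rfl⟩
  | whil p l args B ih =>
    have hw := hW (lsymOf z)
    simp only [lsymCount] at hw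
    have wB : WellLabelled B := fun x => by have := hW x; simp only [lsymCount] at this; omega
    rcases whil_split h with ⟨⟨b, rfl⟩, h1, h2⟩ | ⟨c, r, s, w, rfl, rfl, hB, hw1, hall⟩ <;>
      rcases whil_split h' with ⟨⟨b', rfl⟩, h1', h2'⟩ |
        ⟨c', r', s', w', rfl, rfl, hB', hw1', hall'⟩
    · exact h2 _ h1'
    · have h2 := count_pos_of_path hB'; rw [← hz] at h2; simp [lsymOf] at hw h2; omega
    · have h1 := count_pos_of_path hB; rw [hz] at h1 hw; simp [lsymOf] at hw h1; omega
    · have := hall _ (ih wB hB hB') w' hw1'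
      simpa using this

/-- Both values of a predicate letter are possible after a given initial part of a path. -/
theorem flip_path {S : Schema} {u v : List Letter} {p l : ℕ} {args : List ℕ} {b : Bool}
    (h : u ++ .prd p l args b :: v ∈ Paths S) (b' : Bool) :
    ∃ v', u ++ .prd p l args b' :: v' ∈ Paths S := by
  induction S generalizing u v with
  | skip => simp [Paths] at h
  | assign y f l args =>
    simp only [Paths, Set.mem_singleton_iff, List.append_eq_singleton_iff] at h
    simp at h
  | seq A B ihA ihB =>
    obtain ⟨x, hx, y, hy, he⟩ := h
    rcases split_append he with ⟨r, rfl, rfl⟩ | ⟨r, rfl, rfl⟩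
    · obtain ⟨v', hv⟩ := ihA hx
      exact ⟨v' ++ y, _, hv, y, hy, by simp⟩
    · obtain ⟨v', hv⟩ := ihB hy
      exact ⟨v', x, hx, _, hv, by simp⟩
  | ite q m brgs A B ihA ihB =>
    rcases ite_split h with ⟨rfl, c, hc⟩ | ⟨r, rfl, hr⟩ | ⟨r, rfl, hr⟩
    · cases hc
      cases b' with
      | true =>
        obtain ⟨x, hx⟩ := paths_nonempty_s2 A
        exact ⟨x, Or.inl ⟨x, hx, rfl⟩⟩
      | false =>
        obtain ⟨x, hx⟩ := paths_nonempty_s2 B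
        exact ⟨x, Or.inr ⟨x, hx, rfl⟩⟩
    · obtain ⟨v', hv⟩ := ihA hr
      exact ⟨v', Or.inl ⟨_, hv, rfl⟩⟩
    · obtain ⟨v', hv⟩ := ihB hr
      exact ⟨v', Or.inr ⟨_, hv, rfl⟩⟩
  | whil q m brgs B ih =>
    rcases whil_split h with ⟨⟨c, hc⟩, h1, h2⟩ | ⟨c, r, s, w, rfl, rfl, hB, hw1, hall⟩
    · cases hc
      cases b' with
      | true =>
        obtain ⟨x, hx⟩ := paths_nonempty_s2 B
        exact ⟨_, h2 _ (whil_cons hx (whil_nil _ _ _ _))⟩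
      | false => exact ⟨_, h2 _ (whil_nil _ _ _ _)⟩
    · obtain ⟨v', hv⟩ := ih hB
      have := hall _ hv w hw1
      exact ⟨v' ++ w, by simpa using this⟩

/-! ### Symbolic execution -/

theorem execP_herb (i : HInterp) (σ : List Letter) : execP (herb i) eSt σ = hexec σ := by
  have : stepL (herb i) = stepL (herb fun _ _ => false) := by
    funext d z
    cases z <;> rfl
  simp only [hexec, execP, this]

theorem hexec_append_asn (σ : List Letter) (y f l : ℕ) (args : List ℕ) :
    hexec (σ ++ [.asn y f l args]) =
      Function.update (hexec σ) y (.app f (args.map (hexec σ))) := by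
  simp [hexec, execP, stepL, herb]

theorem hexec_append_prd (σ : List Letter) (p l : ℕ) (args : List ℕ) (b : Bool) :
    hexec (σ ++ [.prd p l args b]) = hexec σ := by
  simp [hexec, execP, stepL]

/-- No letter of `σ` assigns to `v`. -/
def Unassigned (σ : List Letter) (v : ℕ) : Prop :=
  ∀ z f l args, Letter.asn z f l args ∈ σ → z ≠ v

theorem hexec_unassigned (a σ : List Letter) (v : ℕ) (h : Unassigned σ v) :
    hexec (a ++ σ) v = hexec a v := by
  induction σ using List.reverseRecOn with
  | nil => simp
  | append_singleton σ z ih =>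
    have hσ : Unassigned σ v := fun z f l args hm => h z f l args (by simp [hm])
    rw [← List.append_assoc]
    cases z with
    | asn y f l args =>
      have : y ≠ v := h y f l args (by simp)
      rw [hexec_append_asn, Function.update_of_ne this.symm, ih hσ]
    | prd p l args b => rw [hexec_append_prd, ih hσ]

/-- A variable holds either its initial value or the term put there by the last assignment
to it. -/
theorem last_assignment (σ : List Letter) (v : ℕ) :
    (Unassigned σ v ∧ hexec σ v = .var v) ∨
    ∃ s f l args t, σ = s ++ .asn v f l args :: t ∧ Unassigned t v ∧
      hexec σ v = .app f (args.map (hexec s)) := by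
  induction σ using List.reverseRecOn with
  | nil => left; exact ⟨fun z f l args h => by simp at h, rfl⟩
  | append_singleton σ z ih =>
    by_cases hz : ∃ f l args, z = .asn v f l args
    · obtain ⟨f, l, args, rfl⟩ := hz
      right
      refine ⟨σ, f, l, args, [], rfl, fun z f l args h => by simp at h, ?_⟩
      simp [hexec_append_asn]
    · have hu : Unassigned [z] v := by
        rintro y f l args h rfl
        simp only [List.mem_singleton] at h
        exact hz ⟨f, l, args, h.symm⟩
      have happ : ∀ t, Unassigned t v → Unassigned (t ++ [z]) v := by
        intro t ht y f l args hm
        rcases List.mem_append.1 hm with h | h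
        · exact ht y f l args h
        · exact hu y f l args h
      rcases ih with ⟨h1, h2⟩ | ⟨s, f, l, args, t, rfl, ht, hv⟩
      · left
        exact ⟨happ _ h1, by rw [hexec_unassigned _ _ _ hu, h2]⟩
      · right
        exact ⟨s, f, l, args, t ++ [z], by simp, happ _ ht, by
          rw [hexec_unassigned _ _ _ hu, hv]⟩

/-! ### Clashes -/

/-- No two letters of the word `σ` have the same symbol applied to the same terms. -/
def ClashFree (σ : List Letter) : Prop :=
  ∀ a x μ y b, σ = a ++ x :: (μ ++ y :: b) → symOf x = symOf y →
    (refsOf x).map (hexec a) ≠ (refsOf y).map (hexec (a ++ x :: μ))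

/-- In a clash-free word, an occurrence of a letter is determined by its symbol and the terms
it references. -/
theorem ClashFree.eq {σ s s' t t' : List Letter} {x x' : Letter} (h : ClashFree σ)
    (e : σ = s ++ x :: t) (e' : σ = s' ++ x' :: t') (hs : symOf x = symOf x')
    (hv : (refsOf x).map (hexec s) = (refsOf x').map (hexec s')) :
    s = s' ∧ x = x' ∧ t = t' := by
  have he : s ++ x :: t = s' ++ x' :: t' := e.symm.trans e'
  rcases List.append_eq_append_iff.1 he with ⟨c, rfl, hd⟩ | ⟨c, rfl, hd⟩
  · cases c with
    | nil => simp at hd ⊢; exact hd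
    | cons k c =>
      simp only [List.cons_append, List.cons.injEq] at hd
      obtain ⟨rfl, rfl⟩ := hd
      exact absurd hv (h s x c x' t' e hs)
  · cases c with
    | nil => simp at hd ⊢; exact ⟨hd.1.symm, hd.2.symm⟩
    | cons k c =>
      simp only [List.cons_append, List.cons.injEq] at hd
      obtain ⟨rfl, rfl⟩ := hd
      exact absurd hv.symm (h s' x' c x t e' hs.symm)

/-- In a clash-free word, a term held by a variable `v` at some point and by `w` at the end is
held by the same variable, which has not been assigned in between. -/
theorem same_var {a ν : List Letter} (h : ClashFree (a ++ ν)) {v w : ℕ}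
    (hv : hexec a v = hexec (a ++ ν) w) : v = w ∧ Unassigned ν w := by
  rcases last_assignment (a ++ ν) w with ⟨h1', h2'⟩ | ⟨s', f', l', args', t', he', ht', hs'⟩ <;>
    rcases last_assignment a v with ⟨h1, h2⟩ | ⟨s, f, l, args, t, rfl, ht, hs⟩
  · rw [h2, h2'] at hv
    cases hv
    exact ⟨rfl, fun z f l args hm => h1' z f l args (by simp [hm])⟩
  · rw [hs, h2'] at hv
    cases hv
  · rw [h2, hs'] at hv
    cases hv
  · rw [hs, hs'] at hv
    simp only [Trm.app.injEq] at hv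
    obtain ⟨rfl, hv⟩ := hv
    obtain ⟨rfl, hx, rfl⟩ := h.eq (s := s) (x := .asn v f l args) (t := t ++ ν)
      (by simp) he' rfl hv
    cases hx
    exact ⟨rfl, fun z f l args hm => ht' z f l args (by simp [hm])⟩

theorem exists_repeat {α β : Type*} (f : α → β) (l : List α) (h : ¬ (l.map f).Nodup) :
    ∃ u z v z' w, l = u ++ z :: (v ++ z' :: w) ∧ f z = f z' := by
  induction l with
  | nil => simp at h
  | cons k l ih =>
    by_cases hk : f k ∈ l.map f
    · obtain ⟨z', hz', he⟩ := List.mem_map.1 hk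
      obtain ⟨v, w, rfl⟩ := List.append_of_mem hz'
      exact ⟨[], k, v, z', w, rfl, he.symm⟩
    · have : ¬ (l.map f).Nodup := fun hn => h (by
        rw [List.map_cons]; exact List.nodup_cons.2 ⟨hk, hn⟩)
      obtain ⟨u, z, v, z', w, rfl, he⟩ := ih this
      exact ⟨k :: u, z, v, z', w, rfl, he⟩

/-- The condition of the theorem, as a predicate on schemas. -/
def Cond (S : Schema) : Prop :=
  ∀ (x : Letter) (μ : List Letter) (y : Letter),
    PathSegment S (x :: (μ ++ [y])) → symOf x = symOf y →
    ((x :: μ).map lsymOf).Nodup → ((μ ++ [y]).map lsymOf).Nodup →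
    (refsOf x ≠ refsOf y ∨
      ∃ a ∈ x :: μ, ∃ z f l args, a = Letter.asn z f l args ∧ z ∈ refsOf y)

theorem symOf_eq {z z' : Letter} (h : lsymOf z = lsymOf z') : symOf z = symOf z' := by
  cases z <;> cases z' <;> simp_all [lsymOf, symOf]

/-- Under the condition of the theorem, no segment `x μ y` has end letters with the same symbol
and the same referenced variables, none of them assigned in `x μ`; here `x μ` and `μ y` may
repeat labelled symbols. -/
theorem shrink {S : Schema} (hW : WellLabelled S) (hC : Cond S) (n : ℕ) :
    ∀ (a μ b : List Letter) (x y : Letter), μ.length = n →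
      a ++ x :: (μ ++ y :: b) ∈ Paths S → symOf x = symOf y → refsOf x = refsOf y →
      (∀ v ∈ refsOf y, Unassigned (x :: μ) v) → False := by
  induction n using Nat.strong_induction_on with
  | _ n ih =>
    intro a μ b x y hn hP hs hr hu
    have hin : ∀ z ∈ a ++ x :: (μ ++ y :: b), z ∈ lettersOf S := fun z hz => mem_lettersOf hP hz
    by_cases hx : lsymOf x ∈ μ.map lsymOf
    · -- the labelled symbol of `x` recurs in `μ`: start at the recurrence instead
      obtain ⟨z, hz, hzx⟩ := List.mem_map.1 hx
      obtain ⟨u, w, rfl⟩ := List.append_of_mem hz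
      refine ih w.length (by simp at hn; omega) (a ++ x :: u) w b z y rfl
        (by simpa using hP) ((symOf_eq hzx).trans hs)
        ((refs_eq hW (hin z (by simp)) (hin x (by simp)) hzx).trans hr) ?_
      intro v hv z' f l args hm
      refine hu v hv z' f l args ?_
      simp only [List.mem_cons, List.mem_append] at hm ⊢
      tauto
    by_cases hy : lsymOf y ∈ μ.map lsymOf
    · -- the labelled symbol of `y` occurs in `μ`: stop at that occurrence instead
      obtain ⟨z, hz, hzy⟩ := List.mem_map.1 hy
      obtain ⟨u, w, rfl⟩ := List.append_of_mem hz
      have hrz := refs_eq hW (hin z (by simp)) (hin y (by simp)) hzy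
      refine ih u.length (by simp at hn; omega) a u (w ++ y :: b) x z rfl
        (by simpa using hP) (hs.trans (symOf_eq hzy).symm) (hr.trans hrz.symm) ?_
      intro v hv z' f l args hm
      rw [hrz] at hv
      refine hu v hv z' f l args ?_
      simp only [List.mem_cons, List.mem_append] at hm ⊢
      tauto
    by_cases hm : (μ.map lsymOf).Nodup
    · rcases hC x μ y ⟨a, b, by simpa using hP⟩ hs
        (by rw [List.map_cons]; exact List.nodup_cons.2 ⟨hx, hm⟩)
        (by
          rw [List.map_append, List.nodup_append]
          refine ⟨hm, by simp, ?_⟩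
          intro k hk k' hk' hkk
          simp only [List.map_cons, List.map_nil, List.mem_singleton] at hk'
          exact hy (by rw [← hk', ← hkk]; exact hk)) with h | ⟨_, hmem, z, f, l, args, rfl, hz⟩
      · exact h hr
      · exact hu z hz z f l args hmem rfl
    · -- a labelled symbol repeats inside `μ`: cut out the piece between the two occurrences
      obtain ⟨u, z, v, z', w, rfl, hzz⟩ := exists_repeat _ _ hm
      have h1 : (a ++ x :: u) ++ z :: (v ++ z' :: w ++ y :: b) ∈ Paths S := by simpa using hP
      have h2 : (a ++ x :: (u ++ z :: v)) ++ z' :: (w ++ y :: b) ∈ Paths S := by simpa using hP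
      have h3 := exchange hW h1 h2 hzz
      refine ih (u ++ z' :: w).length (by simp at hn ⊢; omega) a (u ++ z' :: w) b x y rfl
        (by simpa using h3) hs hr ?_
      intro v' hv z' f l args hm
      refine hu v' hv z' f l args ?_
      simp only [List.mem_cons, List.mem_append] at hm ⊢
      tauto

/-- Induction on the length of the prefix: the letter added last cannot clash with an earlier
one, since by `same_var` such a clash would give a segment excluded by `shrink`. -/
theorem no_clash {S : Schema} (hW : WellLabelled S) (hC : Cond S) {σ : List Letter} :
    ∀ τ, σ ++ τ ∈ Paths S → ClashFree σ := by
  induction σ using List.reverseRecOn with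
  | nil => intro τ _ a x μ y b h; simp at h
  | append_singleton σ z ih =>
    intro τ hP a x μ y b he hs hv
    have hσ : ClashFree σ := ih (z :: τ) (by simpa using hP)
    rcases List.eq_nil_or_concat b with rfl | ⟨b', k, rfl⟩
    · have he' : σ ++ [z] = (a ++ x :: μ) ++ [y] := by simpa using he
      obtain ⟨rfl, hz⟩ := List.append_inj' he' rfl
      simp only [List.cons.injEq, and_true] at hz
      subst hz
      have hlen : (refsOf x).length = (refsOf z).length := by
        simpa using congrArg List.length hv
      have key : ∀ k (h1 : k < (refsOf x).length) (h2 : k < (refsOf z).length),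
          (refsOf x)[k] = (refsOf z)[k] ∧ Unassigned (x :: μ) (refsOf z)[k] := by
        intro k h1 h2
        refine same_var hσ ?_
        have := List.getElem_of_eq hv (i := k) (by simpa using h1)
        simpa using this
      refine shrink hW hC _ a μ τ x z rfl (by simpa using hP) hs
        (List.ext_getElem hlen fun k h1 h2 => (key k h1 h2).1) ?_
      intro v hm
      obtain ⟨k, hk, rfl⟩ := List.getElem_of_mem hm
      exact (key k (hlen ▸ hk) hk).2
    · have he' : σ ++ [z] = (a ++ x :: (μ ++ y :: b')) ++ [k] := by simpa using he
      obtain ⟨rfl, -⟩ := List.append_inj' he' rfl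
      exact hσ a x μ y b' rfl hs hv

theorem clashFree_pre {S : Schema} (hW : WellLabelled S) (hC : Cond S) {σ : List Letter}
    (hσ : σ ∈ PrePaths S) : ClashFree σ := by
  obtain ⟨_, ⟨τ, rfl⟩, h⟩ := hσ
  exact no_clash hW hC τ h

/-- Along a clash-free word the required truth values are attached to distinct predicate terms,
so some interpretation realises them all. -/
theorem ClashFree.exists_agrees {σ : List Letter} (h : ClashFree σ) :
    ∃ i : HInterp, hAgrees i σ := by
  classical
  refine ⟨fun p ts => decide (∃ τ l args, τ ++ [Letter.prd p l args true] <+: σ ∧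
    args.map (hexec τ) = ts), ?_⟩
  intro τ p l args b hpre
  rw [execP_herb]
  simp only [herb]
  cases b with
  | true => exact decide_eq_true ⟨τ, l, args, hpre, rfl⟩
  | false =>
    refine decide_eq_false ?_
    rintro ⟨τ', l', args', hpre', hv⟩
    obtain ⟨r, hr⟩ := hpre
    obtain ⟨r', hr'⟩ := hpre'
    have := (h.eq (s := τ') (s' := τ) (x := .prd p l' args' true)
      (x' := .prd p l args false) (t := r') (t' := r) (by simpa using hr'.symm)
      (by simpa using hr.symm) rfl hv).2.1
    cases this

/-! ### The characterization -/

theorem cond_of_liberal_free {S : Schema} (hL : Liberal S) (hF : Free S) : Cond S := by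
  rintro x μ y ⟨a, b, hP⟩ hs - -
  by_contra hcon
  push Not at hcon
  obtain ⟨hr, hun⟩ := hcon
  have hP' : (a ++ x :: μ) ++ y :: b ∈ Paths S := by simpa using hP
  have hval : (refsOf x).map (hexec a) = (refsOf y).map (hexec (a ++ x :: μ)) := by
    rw [hr]
    refine List.map_congr_left fun v hv => (hexec_unassigned a (x :: μ) v ?_).symm
    rintro z f l args hm rfl
    exact hun _ hm z f l args rfl hv
  cases x with
  | asn v f l args =>
    cases y with
    | prd p m brgs c => cases hs
    | asn w g m brgs =>
      have hpre : a ++ Letter.asn v f l args :: (μ ++ [Letter.asn w g m brgs]) ∈ PrePaths S :=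
        ⟨_, ⟨b, by simp⟩, hP'⟩
      obtain ⟨i, hi⟩ := hF _ hpre
      refine hL i a μ v f l args w g m brgs hpre hi ?_
      have e : a ++ Letter.asn v f l args :: (μ ++ [Letter.asn w g m brgs]) =
        (a ++ Letter.asn v f l args :: μ) ++ [Letter.asn w g m brgs] := by simp
      rw [e, hexec_append_asn, hexec_append_asn]
      simp only [symOf, Sum.inl.injEq] at hs
      simp only [refsOf] at hval
      simp [hs, hval]
  | prd p l args c =>
    cases y with
    | asn w g m brgs => cases hs
    | prd q m brgs c' =>
      simp only [symOf, Sum.inr.injEq] at hs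
      simp only [refsOf] at hval
      subst hs
      -- the path on which the second occurrence takes the value opposite to the first
      obtain ⟨v', hv'⟩ := flip_path hP' (!c)
      obtain ⟨i, hi⟩ := hF ((a ++ Letter.prd p l args c :: μ) ++ [Letter.prd p m brgs (!c)])
        ⟨_, ⟨v', by simp⟩, hv'⟩
      have h1 := hi a p l args c ⟨μ ++ [Letter.prd p m brgs (!c)], by simp⟩
      have h2 := hi _ p m brgs (!c) (List.prefix_refl _)
      rw [execP_herb] at h1 h2
      rw [← hval, h1] at h2
      cases c <;> cases h2

/-- Theorem 8 / lib.free.cond.thm, Paterson: a schema is both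
liberal and free iff for every path-segment `x̃ μ ỹ` whose end letters carry
the same symbol and in which no labelled symbol repeats within `x̃ μ` nor
within `μ ỹ`, either the end letters reference different variable vectors or
`x̃ μ` contains an assignment to a variable referenced by `ỹ`. -/
theorem liberal_and_free_characterization (S : Schema) (hW : WellLabelled S) :
    (Liberal S ∧ Free S) ↔
      ∀ (x : Letter) (μ : List Letter) (y : Letter),
        PathSegment S (x :: (μ ++ [y])) → symOf x = symOf y →
        ((x :: μ).map lsymOf).Nodup → ((μ ++ [y]).map lsymOf).Nodup →
        (refsOf x ≠ refsOf y ∨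
          ∃ a ∈ x :: μ, ∃ z f l args, a = Letter.asn z f l args ∧ z ∈ refsOf y) := by
  refine ⟨fun h => cond_of_liberal_free h.1 h.2, fun hC => ⟨?_, ?_⟩⟩
  · intro i μ ν y f l args w g m brgs hpre _ heq
    have hcf := clashFree_pre hW hC hpre
    have e : μ ++ Letter.asn y f l args :: (ν ++ [Letter.asn w g m brgs]) =
      (μ ++ Letter.asn y f l args :: ν) ++ [Letter.asn w g m brgs] := by simp
    rw [e, hexec_append_asn, hexec_append_asn] at heq
    simp only [Function.update_self, Trm.app.injEq] at heq
    exact hcf μ (.asn y f l args) ν (.asn w g m brgs) [] rfl (congrArg Sum.inl heq.1) heq.2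
  · intro σ hσ
    exact (clashFree_pre hW hC hσ).exists_agrees

end SchemaSlicing
end

section
/- Let S be any schema, let u ∈ Var ∪ {ω}, and let T be a subschema of S whose set of labelled symbols equals Need_S(u). Then T is a u-slice of S (for u a variable), respectively an ω-slice of S (for u = ω). -/
namespace SchemaSlicing

open scoped Classical in
/-- The subword of `σ` formed by the letters whose labelled symbol lies in `N`. -/
noncomputable def proj (N : Set LSym) (σ : List Letter) : List Letter :=
  σ.filter fun x => decide (lsymOf x ∈ N)

theorem proj_nil (N : Set LSym) : proj N [] = [] := rfl

theorem proj_append (N : Set LSym) (σ τ : List Letter) :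
    proj N (σ ++ τ) = proj N σ ++ proj N τ := by
  simp [proj]

theorem proj_cons_mem {N : Set LSym} {x : Letter} (h : lsymOf x ∈ N) (σ : List Letter) :
    proj N (x :: σ) = x :: proj N σ := by
  simp [proj, h]

theorem proj_cons_not_mem {N : Set LSym} {x : Letter} (h : lsymOf x ∉ N) (σ : List Letter) :
    proj N (x :: σ) = proj N σ := by
  simp [proj, h]

theorem proj_eq_nil {N : Set LSym} {σ : List Letter} (h : ∀ x ∈ σ, lsymOf x ∉ N) :
    proj N σ = [] := by
  simpa [proj, List.filter_eq_nil_iff] using h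

/-! ### Labelled symbols of schemas and of their paths -/

theorem mem_lsymSet_iff (S : Schema) (x : LSym) : x ∈ lsymSet S ↔ 0 < lsymCount S x := by
  induction S with
  | skip => simp [lsymSet, lsymCount]
  | assign y f l args =>
    simp only [lsymSet, lsymCount, Set.mem_singleton_iff]
    split_ifs <;> simp_all
  | seq a b iha ihb =>
    simp only [lsymSet, lsymCount, Set.mem_union, iha, ihb]
    omega
  | ite p l args t e iht ihe =>
    simp only [lsymSet, lsymCount, Set.mem_union, Set.mem_insert_iff, iht, ihe]
    split_ifs with h
    · simp only [h, true_or, true_iff]; omega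
    · simp only [h, false_or]; omega
  | whil p l args b ih =>
    simp only [lsymSet, lsymCount, Set.mem_insert_iff, ih]
    split_ifs with h
    · simp only [h, true_or, true_iff]; omega
    · simp only [h, false_or]; omega

theorem whileIter_induction {p l : ℕ} {args : List ℕ} {B : Set (List Letter)}
    {P : List Letter → Prop} (h0 : P [Letter.prd p l args false])
    (h1 : ∀ x ∈ B, ∀ y, P y → P (Letter.prd p l args true :: (x ++ y))) :
    ∀ n, ∀ σ ∈ whileIter p l args B n, P σ := by
  intro n
  induction n with
  | zero => rintro σ rfl; exact h0
  | succ n ih =>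
    rintro σ ⟨x, hx, y, hy, rfl⟩
    exact h1 x hx y (ih y hy)

theorem lsymOf_mem_of_path {S : Schema} :
    ∀ {σ}, σ ∈ Paths S → ∀ x ∈ σ, lsymOf x ∈ lsymSet S := by
  induction S with
  | skip => rintro σ rfl; simp
  | assign y f l args => rintro σ rfl; simp [lsymSet, lsymOf]
  | seq a b iha ihb =>
    rintro σ ⟨x, hx, y, hy, rfl⟩ z hz
    rcases List.mem_append.1 hz with h | h
    · exact Or.inl (iha hx z h)
    · exact Or.inr (ihb hy z h)
  | ite p l args t e iht ihe =>
    rintro σ (⟨x, hx, rfl⟩ | ⟨x, hx, rfl⟩) z hz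
    · rcases List.mem_cons.1 hz with rfl | h
      · exact Or.inl rfl
      · exact Or.inr (Or.inl (iht hx z h))
    · rcases List.mem_cons.1 hz with rfl | h
      · exact Or.inl rfl
      · exact Or.inr (Or.inr (ihe hx z h))
  | whil p l args b ih =>
    rintro σ ⟨n, hn⟩
    refine whileIter_induction (P := fun σ => ∀ x ∈ σ, lsymOf x ∈ lsymSet (.whil p l args b))
      ?_ ?_ n σ hn
    · intro x hx
      rw [List.mem_singleton.1 hx]
      exact Or.inl rfl
    · intro x hx y hy z hz
      rcases List.mem_cons.1 hz with rfl | h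
      · exact Or.inl rfl
      · rcases List.mem_append.1 h with h | h
        · exact Or.inr (ih hx z h)
        · exact hy z h

theorem Occurs.whil_lsym {p l : ℕ} {args : List ℕ} {b S : Schema}
    (h : Occurs (.whil p l args b) S) : LSym.pr p l ∈ lsymSet S := by
  generalize hW : Schema.whil p l args b = W at h
  induction h with
  | refl => subst hW; exact Or.inl rfl
  | seqL _ ih => exact Or.inl ih
  | seqR _ ih => exact Or.inr ih
  | iteT _ ih => exact Or.inr (Or.inl ih)
  | iteF _ ih => exact Or.inr (Or.inr ih)
  | whilB _ ih => exact Or.inr ih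

/-! ### Subschemas, syntax-directed -/

/-- A syntax-directed presentation of `Subschema`, without a transitivity rule. -/
inductive Sub : Schema → Schema → Prop
  | skip (S : Schema) : Sub .skip S
  | assign (y f l : ℕ) (args : List ℕ) : Sub (.assign y f l args) (.assign y f l args)
  | seq {a a' b b' : Schema} : Sub a' a → Sub b' b → Sub (.seq a' b') (.seq a b)
  | seqL {A a : Schema} (b : Schema) : Sub A a → Sub A (.seq a b)
  | seqR {A b : Schema} (a : Schema) : Sub A b → Sub A (.seq a b)
  | ite {t t' e e' : Schema} (p l : ℕ) (args : List ℕ) :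
      Sub t' t → Sub e' e → Sub (.ite p l args t' e') (.ite p l args t e)
  | whil {b b' : Schema} (p l : ℕ) (args : List ℕ) :
      Sub b' b → Sub (.whil p l args b') (.whil p l args b)

theorem Sub.refl (S : Schema) : Sub S S := by
  induction S with
  | skip => exact .skip _
  | assign y f l args => exact .assign y f l args
  | seq a b iha ihb => exact .seq iha ihb
  | ite p l args t e iht ihe => exact .ite p l args iht ihe
  | whil p l args b ih => exact .whil p l args ih

theorem Sub.trans {A B C : Schema} (hAB : Sub A B) (hBC : Sub B C) : Sub A C := by
  induction hBC generalizing A with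
  | skip S => cases hAB; exact .skip _
  | assign y f l args => exact hAB
  | seq _ _ iha ihb =>
    cases hAB with
    | skip => exact .skip _
    | seq h₁ h₂ => exact .seq (iha h₁) (ihb h₂)
    | seqL _ h => exact .seqL _ (iha h)
    | seqR _ h => exact .seqR _ (ihb h)
  | seqL b _ ih => exact .seqL b (ih hAB)
  | seqR a _ ih => exact .seqR a (ih hAB)
  | ite p l args _ _ iht ihe =>
    cases hAB with
    | skip => exact .skip _
    | ite _ _ _ h₁ h₂ => exact .ite p l args (iht h₁) (ihe h₂)
  | whil p l args _ ih =>
    cases hAB with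
    | skip => exact .skip _
    | whil _ _ _ h => exact .whil p l args (ih h)

theorem Subschema.sub {T S : Schema} (h : Subschema T S) : Sub T S := by
  induction h with
  | skip S => exact .skip S
  | refl S => exact .refl S
  | seqL a b => exact .seqL b (.refl a)
  | seqR a b => exact .seqR a (.refl b)
  | seqCongrL T _ ih => exact .seq ih (.refl T)
  | seqCongrR S _ ih => exact .seq (.refl S) ih
  | whilCongr p l args _ ih => exact .whil p l args ih
  | iteCongrT p l args E _ ih => exact .ite p l args ih (.refl E)
  | iteCongrF p l args T _ ih => exact .ite p l args (.refl T) ih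
  | trans _ _ ih₁ ih₂ => exact ih₁.trans ih₂

theorem Sub.lsymSet_subset {T S : Schema} (h : Sub T S) : lsymSet T ⊆ lsymSet S := by
  induction h with
  | skip S => exact Set.empty_subset _
  | assign => exact subset_rfl
  | seq _ _ iha ihb => exact Set.union_subset_union iha ihb
  | seqL b _ ih => exact ih.trans Set.subset_union_left
  | seqR a _ ih => exact ih.trans Set.subset_union_right
  | ite p l args _ _ iht ihe => exact Set.insert_subset_insert (Set.union_subset_union iht ihe)
  | whil p l args _ ih => exact Set.insert_subset_insert ih

/-- `Kept N T S`: `T` arises from `S` by deleting statements in such a way that a symbol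
occurrence of `S` survives exactly when its labelled symbol belongs to `N`. -/
inductive Kept (N : Set LSym) : Schema → Schema → Prop
  | skip (S : Schema) : (∀ x ∈ lsymSet S, x ∉ N) → Kept N .skip S
  | assign (y f l : ℕ) (args : List ℕ) :
      LSym.fn f l ∈ N → Kept N (.assign y f l args) (.assign y f l args)
  | seq {a a' b b' : Schema} : Kept N a' a → Kept N b' b → Kept N (.seq a' b') (.seq a b)
  | seqL {A a : Schema} (b : Schema) :
      Kept N A a → (∀ x ∈ lsymSet b, x ∉ N) → Kept N A (.seq a b)
  | seqR {A b : Schema} (a : Schema) :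
      Kept N A b → (∀ x ∈ lsymSet a, x ∉ N) → Kept N A (.seq a b)
  | ite {t t' e e' : Schema} (p l : ℕ) (args : List ℕ) :
      LSym.pr p l ∈ N → Kept N t' t → Kept N e' e →
        Kept N (.ite p l args t' e') (.ite p l args t e)
  | whil {b b' : Schema} (p l : ℕ) (args : List ℕ) :
      LSym.pr p l ∈ N → Kept N b' b → Kept N (.whil p l args b') (.whil p l args b)

/-- Since labels are distinct, a deleted occurrence cannot share its labelled symbol with a
surviving one. -/
theorem Sub.kept {N : Set LSym} {T S : Schema} (h : Sub T S) (hW : WellLabelled S)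
    (hN : ∀ x ∈ lsymSet S, x ∈ N ↔ x ∈ lsymSet T) : Kept N T S := by
  induction h with
  | skip S => exact .skip S fun x hx hxN => ((hN x hx).1 hxN)
  | assign y f l args => exact .assign y f l args ((hN _ rfl).2 rfl)
  | @seq a a' b b' ha hb iha ihb =>
    have disj : ∀ x, x ∈ lsymSet a → x ∉ lsymSet b := by
      intro x h₁ h₂
      rw [mem_lsymSet_iff] at h₁ h₂
      have := hW x
      simp only [lsymCount] at this
      omega
    refine .seq (iha (fun x => ?_) fun x hx => ?_) (ihb (fun x => ?_) fun x hx => ?_)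
    · have := hW x; simp only [lsymCount] at this; omega
    · rw [hN x (Or.inl hx)]
      exact ⟨fun h => h.resolve_right fun h => disj x hx (hb.lsymSet_subset h), Or.inl⟩
    · have := hW x; simp only [lsymCount] at this; omega
    · rw [hN x (Or.inr hx)]
      exact ⟨fun h => h.resolve_left fun h => disj x (ha.lsymSet_subset h) hx, Or.inr⟩
  | @seqL A a b ha ih =>
    refine .seqL b (ih (fun x => ?_) fun x hx => hN x (Or.inl hx)) fun x hx hxN => ?_
    · have := hW x; simp only [lsymCount] at this; omega
    · have h₁ := ha.lsymSet_subset ((hN x (Or.inr hx)).1 hxN)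
      rw [mem_lsymSet_iff] at h₁ hx
      have := hW x
      simp only [lsymCount] at this
      omega
  | @seqR A b a hb ih =>
    refine .seqR a (ih (fun x => ?_) fun x hx => hN x (Or.inr hx)) fun x hx hxN => ?_
    · have := hW x; simp only [lsymCount] at this; omega
    · have h₁ := hb.lsymSet_subset ((hN x (Or.inl hx)).1 hxN)
      rw [mem_lsymSet_iff] at h₁ hx
      have := hW x
      simp only [lsymCount] at this
      omega
  | @ite t t' e e' p l args ht he iht ihe =>
    have key : ∀ x, (if x = LSym.pr p l then 1 else 0) + lsymCount t x + lsymCount e x ≤ 1 :=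
      fun x => hW x
    have disj : ∀ x, x ∈ lsymSet t → x ∉ lsymSet e := by
      intro x h₁ h₂
      rw [mem_lsymSet_iff] at h₁ h₂
      have := key x
      omega
    have ne : ∀ x, x ∈ lsymSet t ∨ x ∈ lsymSet e → x ≠ LSym.pr p l := by
      rintro x h rfl
      rw [mem_lsymSet_iff, mem_lsymSet_iff] at h
      have := key (LSym.pr p l)
      rw [if_pos rfl] at this
      omega
    refine .ite p l args ((hN _ (Or.inl rfl)).2 (Or.inl rfl))
      (iht (fun x => ?_) fun x hx => ?_) (ihe (fun x => ?_) fun x hx => ?_)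
    · have := key x; omega
    · rw [hN x (Or.inr (Or.inl hx))]
      exact ⟨fun h => (h.resolve_left (ne x (Or.inl hx))).resolve_right
        fun h => disj x hx (he.lsymSet_subset h), fun h => Or.inr (Or.inl h)⟩
    · have := key x; omega
    · rw [hN x (Or.inr (Or.inr hx))]
      exact ⟨fun h => (h.resolve_left (ne x (Or.inr hx))).resolve_left
        fun h => disj x (ht.lsymSet_subset h) hx, fun h => Or.inr (Or.inr h)⟩
  | @whil b b' p l args hb ih =>
    have key : ∀ x, (if x = LSym.pr p l then 1 else 0) + lsymCount b x ≤ 1 := fun x => hW x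
    refine .whil p l args ((hN _ (Or.inl rfl)).2 (Or.inl rfl)) (ih (fun x => ?_) fun x hx => ?_)
    · have := key x; omega
    · rw [hN x (Or.inr hx)]
      refine ⟨fun h => h.resolve_left ?_, Or.inr⟩
      rintro rfl
      rw [mem_lsymSet_iff] at hx
      have := key (LSym.pr p l)
      rw [if_pos rfl] at this
      omega

theorem proj_path_eq_nil {N : Set LSym} {S : Schema} (h : ∀ x ∈ lsymSet S, x ∉ N)
    {σ : List Letter} (hσ : σ ∈ Paths S) : proj N σ = [] :=
  proj_eq_nil fun x hx => h _ (lsymOf_mem_of_path hσ x hx)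

/-- Erasing the deleted letters turns a complete path of `S` into one of `T`. -/
theorem Kept.proj_mem {N : Set LSym} {T S : Schema} (h : Kept N T S) :
    ∀ σ ∈ Paths S, proj N σ ∈ Paths T := by
  induction h with
  | skip S h => exact fun σ hσ => proj_path_eq_nil h hσ
  | assign y f l args h =>
    rintro σ rfl
    rw [proj_cons_mem h]
    rfl
  | seq _ _ iha ihb =>
    rintro σ ⟨x, hx, y, hy, rfl⟩
    exact ⟨_, iha x hx, _, ihb y hy, proj_append _ _ _⟩
  | seqL b _ hb ih =>
    rintro σ ⟨x, hx, y, hy, rfl⟩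
    rw [proj_append, proj_path_eq_nil hb hy, List.append_nil]
    exact ih x hx
  | seqR a _ ha ih =>
    rintro σ ⟨x, hx, y, hy, rfl⟩
    rw [proj_append, proj_path_eq_nil ha hx, List.nil_append]
    exact ih y hy
  | ite p l args h _ _ iht ihe =>
    rintro σ (⟨x, hx, rfl⟩ | ⟨x, hx, rfl⟩)
    · exact Or.inl ⟨_, iht x hx, proj_cons_mem h _⟩
    · exact Or.inr ⟨_, ihe x hx, proj_cons_mem h _⟩
  | @whil b b' p l args h _ ih =>
    rintro σ ⟨n, hn⟩
    refine whileIter_induction (P := fun σ => proj N σ ∈ Paths (.whil p l args b')) ?_ ?_ n σ hn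
    · refine ⟨0, ?_⟩
      rw [proj_cons_mem h]
      rfl
    · rintro x hx y ⟨m, hm⟩
      refine ⟨m + 1, _, ih x hx, _, hm, ?_⟩
      rw [proj_cons_mem h, proj_append]

/-! ### Runs driven by an oracle -/

/-- `Follows O h σ`: when `σ` is executed after the history `h`, every predicate letter of `σ`
takes the value that the oracle `O` assigns to it, given the letters executed before it. -/
def Follows (O : List Letter → ℕ → ℕ → List ℕ → Bool) (h σ : List Letter) : Prop :=
  ∀ τ p l args b, τ ++ [Letter.prd p l args b] <+: σ → O (h ++ τ) p l args = b

theorem follows_nil (O : List Letter → ℕ → ℕ → List ℕ → Bool) (h : List Letter) :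
    Follows O h [] := by
  intro τ p l args b hp
  simp at hp

theorem follows_cons {O : List Letter → ℕ → ℕ → List ℕ → Bool} {h : List Letter} {x : Letter}
    {σ : List Letter} :
    Follows O h (x :: σ) ↔
      (∀ p l args b, x = Letter.prd p l args b → O h p l args = b) ∧ Follows O (h ++ [x]) σ := by
  constructor
  · intro H
    refine ⟨?_, ?_⟩
    · rintro p l args b rfl
      simpa using H [] p l args b (by simp)
    · intro τ p l args b hp
      simpa using H (x :: τ) p l args b (by simpa using hp)
  · rintro ⟨H₁, H₂⟩ τ p l args b hp
    cases τ with
    | nil =>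
      simp only [List.nil_append, List.cons_prefix_cons] at hp
      simpa using H₁ p l args b hp.1.symm
    | cons z τ =>
      simp only [List.cons_append, List.cons_prefix_cons] at hp
      obtain ⟨rfl, hp⟩ := hp
      simpa using H₂ τ p l args b hp

theorem follows_prd {O : List Letter → ℕ → ℕ → List ℕ → Bool} {h : List Letter} {p l : ℕ}
    {args : List ℕ} {b : Bool} {σ : List Letter} :
    Follows O h (Letter.prd p l args b :: σ) ↔
      O h p l args = b ∧ Follows O (h ++ [Letter.prd p l args b]) σ := by
  rw [follows_cons]
  refine and_congr_left fun _ => ⟨fun H => H p l args b rfl, ?_⟩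
  rintro H _ _ _ _ ⟨⟩
  exact H

theorem follows_append {O : List Letter → ℕ → ℕ → List ℕ → Bool} {h σ τ : List Letter} :
    Follows O h (σ ++ τ) ↔ Follows O h σ ∧ Follows O (h ++ σ) τ := by
  induction σ generalizing h with
  | nil => simp [follows_nil]
  | cons x σ ih => simp [follows_cons, ih, and_assoc]

theorem follows_asn (O : List Letter → ℕ → ℕ → List ℕ → Bool) (h : List Letter) (y f l : ℕ)
    (args : List ℕ) : Follows O h [Letter.asn y f l args] := by
  rw [follows_cons]
  exact ⟨by rintro _ _ _ _ ⟨⟩, follows_nil _ _⟩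

/-- A schema has at most one complete path following a given oracle. -/
theorem follows_unique {O : List Letter → ℕ → ℕ → List ℕ → Bool} {S : Schema} :
    ∀ {h σ τ}, σ ∈ Paths S → τ ∈ Paths S → Follows O h σ → Follows O h τ → σ = τ := by
  induction S with
  | skip => rintro h σ τ rfl rfl _ _; rfl
  | assign y f l args => rintro h σ τ rfl rfl _ _; rfl
  | seq a b iha ihb =>
    rintro h σ τ ⟨x, hx, y, hy, rfl⟩ ⟨x', hx', y', hy', rfl⟩ H H'
    rw [follows_append] at H H'
    obtain rfl := iha hx hx' H.1 H'.1
    rw [ihb hy hy' H.2 H'.2]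
  | ite p l args t e iht ihe =>
    rintro h σ τ (⟨x, hx, rfl⟩ | ⟨x, hx, rfl⟩) (⟨y, hy, rfl⟩ | ⟨y, hy, rfl⟩) H H' <;>
      rw [follows_prd] at H H'
    · rw [iht hx hy H.2 H'.2]
    · exact absurd (H.1.symm.trans H'.1) (by simp)
    · exact absurd (H.1.symm.trans H'.1) (by simp)
    · rw [ihe hx hy H.2 H'.2]
  | whil p l args b ih =>
    rintro h σ τ ⟨n, hn⟩ ⟨m, hm⟩ H H'
    induction n generalizing h σ τ m with
    | zero =>
      obtain rfl := hn
      cases m with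
      | zero => exact hm.symm
      | succ m =>
        obtain ⟨x, hx, y, hy, rfl⟩ := hm
        rw [follows_prd] at H H'
        exact absurd (H.1.symm.trans H'.1) (by simp)
    | succ n ihn =>
      obtain ⟨x, hx, y, hy, rfl⟩ := hn
      cases m with
      | zero =>
        obtain rfl := hm
        rw [follows_prd] at H H'
        exact absurd (H.1.symm.trans H'.1) (by simp)
      | succ m =>
        obtain ⟨x', hx', y', hy', rfl⟩ := hm
        rw [follows_prd, follows_append] at H H'
        obtain rfl := ih hx hx' H.2.1 H'.2.1
        rw [ihn hy m hy' H.2.2 H'.2.2]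

/-- A loop-free schema terminates whatever its predicates evaluate to. -/
theorem exists_follows_of_loopFree (O : List Letter → ℕ → ℕ → List ℕ → Bool) {S : Schema}
    (hS : ∀ p l args b, ¬ Occurs (.whil p l args b) S) (h : List Letter) :
    ∃ σ ∈ Paths S, Follows O h σ := by
  induction S generalizing h with
  | skip => exact ⟨[], rfl, follows_nil O h⟩
  | assign y f l args => exact ⟨_, rfl, follows_asn O h y f l args⟩
  | seq a b iha ihb =>
    obtain ⟨x, hx, Hx⟩ := iha (fun p l args c hc => hS p l args c hc.seqL) h
    obtain ⟨y, hy, Hy⟩ := ihb (fun p l args c hc => hS p l args c hc.seqR) (h ++ x)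
    exact ⟨_, ⟨x, hx, y, hy, rfl⟩, follows_append.2 ⟨Hx, Hy⟩⟩
  | ite p l args t e iht ihe =>
    cases hO : O h p l args with
    | true =>
      obtain ⟨x, hx, Hx⟩ := iht (fun p l args c hc => hS p l args c hc.iteT) (h ++ [_])
      exact ⟨_, Or.inl ⟨x, hx, rfl⟩, follows_prd.2 ⟨hO, Hx⟩⟩
    | false =>
      obtain ⟨x, hx, Hx⟩ := ihe (fun p l args c hc => hS p l args c hc.iteF) (h ++ [_])
      exact ⟨_, Or.inr ⟨x, hx, rfl⟩, follows_prd.2 ⟨hO, Hx⟩⟩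
  | whil p l args b _ => exact absurd (Occurs.refl _) (hS p l args b)

theorem exists_follows_of_deleted {N : Set LSym} (O : List Letter → ℕ → ℕ → List ℕ → Bool)
    {S : Schema} (hS : ∀ x ∈ lsymSet S, x ∉ N)
    (hloop : ∀ p l args b, Occurs (.whil p l args b) S → LSym.pr p l ∈ N) (h : List Letter) :
    ∃ σ ∈ Paths S, proj N σ = [] ∧ Follows O h σ := by
  obtain ⟨σ, hσ, H⟩ := exists_follows_of_loopFree O
    (fun p l args b hb => hS _ hb.whil_lsym (hloop p l args b hb)) h
  exact ⟨σ, hσ, proj_path_eq_nil hS hσ, H⟩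

/-- If `T` keeps every loop of `S`, and the oracle for `S` answers the surviving predicates as
the oracle for `T` does on the projected history, then a terminating run of `T` lifts to a
terminating run of `S`. -/
theorem Kept.lift {N : Set LSym} {OT OS : List Letter → ℕ → ℕ → List ℕ → Bool}
    (hO : ∀ h p l args, LSym.pr p l ∈ N → OS h p l args = OT (proj N h) p l args)
    {T S : Schema} (hk : Kept N T S)
    (hloop : ∀ p l args b, Occurs (.whil p l args b) S → LSym.pr p l ∈ N) :
    ∀ τ ∈ Paths T, ∀ h, Follows OT (proj N h) τ →
      ∃ σ ∈ Paths S, proj N σ = τ ∧ Follows OS h σ := by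
  have snoc : ∀ {p l : ℕ}, LSym.pr p l ∈ N → ∀ (h : List Letter) (args : List ℕ) (b : Bool),
      proj N (h ++ [Letter.prd p l args b]) = proj N h ++ [Letter.prd p l args b] := by
    intro p l hN h args b
    rw [proj_append, proj_cons_mem hN, proj_nil]
  induction hk with
  | skip S hS =>
    rintro τ rfl h _
    exact exists_follows_of_deleted OS hS hloop h
  | assign y f l args hN =>
    rintro τ rfl h _
    exact ⟨_, rfl, by rw [proj_cons_mem hN, proj_nil], follows_asn OS h y f l args⟩
  | seq _ _ iha ihb =>
    rintro τ ⟨x, hx, y, hy, rfl⟩ h H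
    rw [follows_append] at H
    obtain ⟨x', hx', rfl, Hx⟩ := iha (fun p l args c hc => hloop p l args c hc.seqL) x hx h H.1
    obtain ⟨y', hy', rfl, Hy⟩ := ihb (fun p l args c hc => hloop p l args c hc.seqR) y hy
      (h ++ x') (by rw [proj_append]; exact H.2)
    exact ⟨_, ⟨x', hx', y', hy', rfl⟩, proj_append _ _ _, follows_append.2 ⟨Hx, Hy⟩⟩
  | seqL b _ hb ih =>
    intro τ hτ h H
    obtain ⟨x, hx, rfl, Hx⟩ := ih (fun p l args c hc => hloop p l args c hc.seqL) τ hτ h H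
    obtain ⟨y, hy, hy0, Hy⟩ := exists_follows_of_deleted OS hb
      (fun p l args c hc => hloop p l args c hc.seqR) (h ++ x)
    exact ⟨_, ⟨x, hx, y, hy, rfl⟩, by rw [proj_append, hy0, List.append_nil],
      follows_append.2 ⟨Hx, Hy⟩⟩
  | seqR a _ ha ih =>
    intro τ hτ h H
    obtain ⟨x, hx, hx0, Hx⟩ := exists_follows_of_deleted OS ha
      (fun p l args c hc => hloop p l args c hc.seqL) h
    obtain ⟨y, hy, rfl, Hy⟩ := ih (fun p l args c hc => hloop p l args c hc.seqR) τ hτ (h ++ x)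
      (by rw [proj_append, hx0, List.append_nil]; exact H)
    exact ⟨_, ⟨x, hx, y, hy, rfl⟩, by rw [proj_append, hx0, List.nil_append],
      follows_append.2 ⟨Hx, Hy⟩⟩
  | ite p l args hN _ _ iht ihe =>
    rintro τ (⟨x, hx, rfl⟩ | ⟨x, hx, rfl⟩) h H <;> rw [follows_prd] at H
    · obtain ⟨y, hy, rfl, Hy⟩ := iht (fun p l args c hc => hloop p l args c hc.iteT) x hx
        (h ++ [Letter.prd p l args true]) (by rw [snoc hN]; exact H.2)
      exact ⟨_, Or.inl ⟨y, hy, rfl⟩, proj_cons_mem hN _,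
        follows_prd.2 ⟨(hO _ _ _ _ hN).trans H.1, Hy⟩⟩
    · obtain ⟨y, hy, rfl, Hy⟩ := ihe (fun p l args c hc => hloop p l args c hc.iteF) x hx
        (h ++ [Letter.prd p l args false]) (by rw [snoc hN]; exact H.2)
      exact ⟨_, Or.inr ⟨y, hy, rfl⟩, proj_cons_mem hN _,
        follows_prd.2 ⟨(hO _ _ _ _ hN).trans H.1, Hy⟩⟩
  | @whil b b' p l args hN _ ih =>
    rintro τ ⟨n, hn⟩ h H
    induction n generalizing τ h with
    | zero =>
      obtain rfl := hn
      rw [follows_prd] at H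
      exact ⟨_, ⟨0, rfl⟩, by rw [proj_cons_mem hN, proj_nil],
        follows_prd.2 ⟨(hO _ _ _ _ hN).trans H.1, follows_nil _ _⟩⟩
    | succ n ihn =>
      obtain ⟨x, hx, y, hy, rfl⟩ := hn
      rw [follows_prd, follows_append] at H
      obtain ⟨x', hx', rfl, Hx⟩ := ih (fun p l args c hc => hloop p l args c hc.whilB) x hx
        (h ++ [Letter.prd p l args true]) (by rw [snoc hN]; exact H.2.1)
      obtain ⟨y', ⟨m, hm⟩, rfl, Hy⟩ := ihn y hy (h ++ [Letter.prd p l args true] ++ x')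
        (by rw [proj_append, snoc hN]; exact H.2.2)
      exact ⟨_, ⟨m + 1, x', hx', y', hm, rfl⟩, by rw [proj_cons_mem hN, proj_append],
        follows_prd.2 ⟨(hO _ _ _ _ hN).trans H.1, follows_append.2 ⟨Hx, Hy⟩⟩⟩

/-! ### Data dependence along a path -/

/-- No letter of `σ` assigns to the variable `y`. -/
def NoAsn (y : ℕ) (σ : List Letter) : Prop := ∀ f l args, Letter.asn y f l args ∉ σ

theorem NoAsn.snoc {y : ℕ} {σ : List Letter} (h : NoAsn y σ) {x : Letter}
    (hx : ∀ f l args, x ≠ Letter.asn y f l args) : NoAsn y (σ ++ [x]) := by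
  intro f l args hm
  rcases List.mem_append.1 hm with hm | hm
  · exact h f l args hm
  · exact hx f l args (List.mem_singleton.1 hm).symm

theorem foldl_lStep_noAsn {y : ℕ} {σ : List Letter} (h : NoAsn y σ) (d : ℕ → LTrm) :
    σ.foldl lStep d y = d y := by
  induction σ generalizing d with
  | nil => rfl
  | cons x σ ih =>
    rw [List.foldl_cons, ih fun f l args hm => h f l args (List.mem_cons_of_mem _ hm)]
    cases x with
    | asn z f l args =>
      have hz : y ≠ z := by
        rintro rfl
        exact h f l args List.mem_cons_self
      simp [lStep, hz]
    | prd p l args b => rfl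

theorem lexec_asn_noAsn {y f l : ℕ} {args : List ℕ} {σ : List Letter} (h : NoAsn y σ) :
    IsFLTrm [(f, l)] (lexec (Letter.asn y f l args :: σ) y) := by
  rw [lexec, List.foldl_cons, foldl_lStep_noAsn h]
  simpa [lStep] using IsFLTrm.base f l _

theorem Need.fn_of_fn {S : Schema} {u : Crit} {a b c : List Letter} {y f l z g m : ℕ}
    {args brgs : List ℕ}
    (hσ : a ++ Letter.asn y f l args :: (b ++ Letter.asn z g m brgs :: c) ∈ Paths S)
    (hy : y ∈ brgs) (hb : NoAsn y b) (hg : Need S u (.fn g m)) : Need S u (.fn f l) := by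
  refine .ofDep hg ⟨Letter.asn y f l args :: (b ++ [Letter.asn z g m brgs]), ⟨a, c, ?_⟩, z, ?_⟩
  · simpa using hσ
  · have h := lexec_asn_noAsn (f := f) (l := l) (args := args) hb
    have e : lexec (Letter.asn y f l args :: (b ++ [Letter.asn z g m brgs])) z =
        LTrm.app g m (brgs.map (lexec (Letter.asn y f l args :: b))) := by
      simp [lexec, lStep]
    rw [e]
    exact IsFLTrm.step (F := [(f, l)]) g m (List.mem_map_of_mem hy) h

theorem Need.fn_of_pr {S : Schema} {u : Crit} {a b c : List Letter} {y f l p m : ℕ} {Z : Bool}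
    {args brgs : List ℕ}
    (hσ : a ++ Letter.asn y f l args :: (b ++ Letter.prd p m brgs Z :: c) ∈ Paths S)
    (hy : y ∈ brgs) (hb : NoAsn y b) (hp : Need S u (.pr p m)) : Need S u (.fn f l) := by
  refine .ofDep hp ⟨Letter.asn y f l args :: b, brgs, Z, ⟨a, c, ?_⟩, y, hy, lexec_asn_noAsn hb⟩
  simpa using hσ

theorem Need.fn_of_end {S : Schema} {a b : List Letter} {y f l : ℕ} {args : List ℕ}
    (hσ : a ++ Letter.asn y f l args :: b ∈ Paths S) (hb : NoAsn y b) :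
    Need S (.var y) (.fn f l) :=
  .ofVar ⟨_, ⟨a, hσ⟩, lexec_asn_noAsn hb⟩

theorem execP_snoc {D : Type} (I : Interp D) (d : ℕ → D) (σ : List Letter) (x : Letter) :
    execP I d (σ ++ [x]) = stepL I (execP I d σ) x := by
  simp [execP]

/-- Along a complete path of `S`, erasing the unneeded letters does not change the value of a
variable `w` whose last assignment (if any) is needed. -/
theorem execP_proj {S : Schema} {u : Crit} {D : Type} (I : Interp D) (d : ℕ → D)
    {ρ τ : List Letter} (hσ : ρ ++ τ ∈ Paths S) {w : ℕ}
    (hw : ∀ a f l args b, ρ = a ++ Letter.asn w f l args :: b → NoAsn w b →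
      Need S u (.fn f l)) :
    execP I d ρ w = execP I d (proj {x | Need S u x} ρ) w := by
  induction ρ using List.reverseRecOn generalizing τ w with
  | nil => rfl
  | append_singleton ρ x ih =>
    have hσ' : ρ ++ x :: τ ∈ Paths S := by simpa using hσ
    -- If `x` does not assign to `w`, the last assignment to `w` lies in `ρ`.
    have pass : (∀ f l args, x ≠ Letter.asn w f l args) →
        execP I d ρ w = execP I d (proj {x | Need S u x} ρ) w := by
      intro hx
      refine ih hσ' fun a f l args b hab hb => hw a f l args (b ++ [x]) ?_ (hb.snoc hx)
      simp [hab]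
    have keep : proj {x | Need S u x} (ρ ++ [x]) = proj {x | Need S u x} ρ ∨
        proj {x | Need S u x} (ρ ++ [x]) = proj {x | Need S u x} ρ ++ [x] := by
      rw [proj_append]
      by_cases hx : lsymOf x ∈ {x | Need S u x}
      · exact Or.inr (by rw [proj_cons_mem hx, proj_nil])
      · exact Or.inl (by rw [proj_cons_not_mem hx, proj_nil, List.append_nil])
    cases x with
    | prd p l args b =>
      have h := pass (by rintro _ _ _ ⟨⟩)
      rcases keep with e | e <;> rw [e]
      · rwa [execP_snoc]
      · rwa [execP_snoc, execP_snoc]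
    | asn y f l args =>
      by_cases hyw : y = w
      · subst hyw
        have hn : Need S u (.fn f l) := hw ρ f l args [] rfl (by intro _ _ _ h; cases h)
        have e : proj {x | Need S u x} (ρ ++ [Letter.asn y f l args]) =
            proj {x | Need S u x} ρ ++ [Letter.asn y f l args] := by
          rw [proj_append, proj_cons_mem hn, proj_nil]
        rw [e, execP_snoc, execP_snoc]
        have hargs : args.map (execP I d ρ) =
            args.map (execP I d (proj {x | Need S u x} ρ)) := by
          refine List.map_congr_left fun v hv => ih hσ' fun a g m brgs b hab hb => ?_
          subst hab
          exact Need.fn_of_fn (by simpa using hσ') hv hb hn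
        simp [stepL, hargs]
      · have h := pass (by rintro _ _ _ ⟨⟩; exact hyw rfl)
        have hs : ∀ d' : ℕ → D, stepL I d' (Letter.asn y f l args) w = d' w := by
          intro d'
          simp [stepL, Ne.symm hyw]
        rcases keep with e | e <;> rw [e]
        · rwa [execP_snoc, hs]
        · rwa [execP_snoc, execP_snoc, hs, hs]

/-- A needed predicate met along a complete path of `S` evaluates alike in the state reached by
`S` and in the state reached by executing the needed letters only. -/
theorem args_proj {S : Schema} {u : Crit} {D : Type} (I : Interp D) (d : ℕ → D)
    {ρ τ : List Letter} {p m : ℕ} {brgs : List ℕ} {Z : Bool}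
    (hσ : ρ ++ Letter.prd p m brgs Z :: τ ∈ Paths S) (hp : Need S u (.pr p m)) :
    brgs.map (execP I d ρ) = brgs.map (execP I d (proj {x | Need S u x} ρ)) := by
  refine List.map_congr_left fun v hv => execP_proj I d hσ fun a f l args b hab hb => ?_
  subst hab
  exact Need.fn_of_pr (by simpa using hσ) hv hb hp

/-! ### Simulation of runs -/

/-- The oracle answering each predicate by its value under `I` in the state reached from `d`. -/
def evalOracle {D : Type} (I : Interp D) (d : ℕ → D) :
    List Letter → ℕ → ℕ → List ℕ → Bool :=
  fun h p _ args => I.pr p (args.map (execP I d h))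

theorem agrees_iff_follows {D : Type} {I : Interp D} {d : ℕ → D} {σ : List Letter} :
    Agrees I d σ ↔ Follows (evalOracle I d) [] σ := Iff.rfl

theorem TermRun.unique {D : Type} {S : Schema} {I : Interp D} {d : ℕ → D} {σ τ : List Letter}
    (hσ : TermRun S I d σ) (hτ : TermRun S I d τ) : σ = τ :=
  follows_unique hσ.1 hτ.1 (agrees_iff_follows.1 hσ.2) (agrees_iff_follows.1 hτ.2)

theorem exists_of_proj_eq {N : Set LSym} {σ τ c : List Letter} {x : Letter}
    (h : proj N σ = τ ++ x :: c) :
    ∃ a b, σ = a ++ x :: b ∧ proj N a = τ ∧ lsymOf x ∈ N := by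
  classical
  obtain ⟨a, b, rfl, ha, hb⟩ := List.filter_eq_append_iff.1 h
  obtain ⟨b₁, b₂, rfl, h₁, h₂, -⟩ := List.filter_eq_cons_iff.1 hb
  refine ⟨a ++ b₁, b₂, by simp, ?_, by simpa using h₂⟩
  rw [proj_append, show proj N b₁ = [] from List.filter_eq_nil_iff.2 h₁, List.append_nil]
  exact ha

/-- The needed letters of a terminating run of `S` form a terminating run of `T`. -/
theorem TermRun.proj {S T : Schema} {u : Crit} (hk : Kept {x | Need S u x} T S) {D : Type}
    {I : Interp D} {d : ℕ → D} {σ : List Letter} (h : TermRun S I d σ) :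
    TermRun T I d (proj {x | Need S u x} σ) := by
  refine ⟨hk.proj_mem σ h.1, ?_⟩
  rintro τ p l args b ⟨c, hc⟩
  obtain ⟨a, e, rfl, rfl, hp⟩ := exists_of_proj_eq (τ := τ) (x := Letter.prd p l args b) (c := c)
    (by rw [← hc]; simp)
  rw [← args_proj I d h.1 hp]
  exact h.2 a p l args b ⟨e, by simp⟩

open scoped Classical in
/-- If every loop is needed, a terminating run of `T` comes from a terminating run of `S`. -/
theorem Terminates.lift {S T : Schema} {u : Crit} (hk : Kept {x | Need S u x} T S)
    (hloop : ∀ p l args b, Occurs (.whil p l args b) S → Need S u (.pr p l)) {D : Type}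
    {I : Interp D} {d : ℕ → D} (h : Terminates T I d) : Terminates S I d := by
  obtain ⟨τ, hτ, hA⟩ := h
  -- Needed predicates are evaluated on the projected history, so that the oracle matches the
  -- run of `T` on every history, whether or not it is a path of `S`.
  let OS : List Letter → ℕ → ℕ → List ℕ → Bool := fun h p l args =>
    if Need S u (.pr p l) then evalOracle I d (SchemaSlicing.proj {x | Need S u x} h) p l args
    else evalOracle I d h p l args
  obtain ⟨σ, hσ, -, H⟩ := hk.lift (OT := evalOracle I d) (OS := OS)
    (fun h p l args hp => if_pos hp) hloop τ hτ [] (agrees_iff_follows.1 hA)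
  refine ⟨σ, hσ, ?_⟩
  rintro ρ p l args b ⟨c, rfl⟩
  have hO : OS ρ p l args = b := H ρ p l args b ⟨c, rfl⟩
  by_cases hp : Need S u (.pr p l)
  · rw [args_proj I d (ρ := ρ) (by simpa using hσ) hp, ← hO]
    exact (if_pos hp).symm
  · rw [← hO]
    exact (if_neg hp).symm

/-- Theorem 17 / weiser.thm: if the set of labelled symbols of a
subschema T of S equals Weiser's set `Need_S(u)`, then T is a u-slice of S
(for u a variable), respectively an ω-slice of S (for u = ω). -/
theorem weiser_subschema_is_slice (S T : Schema) (hW : WellLabelled S) (u : Crit)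
    (hsub : Subschema T S) (hls : lsymSet T = {x | Need S u x}) :
    (∀ v : ℕ, u = Crit.var v → IsUSlice S T v) ∧
    (u = Crit.omega → IsOmegaSlice S T) := by
  have hk : Kept {x | Need S u x} T S :=
    hsub.sub.kept hW fun x _ => by rw [hls]
  constructor
  · rintro v rfl D I d ⟨σ, hσ⟩
    refine ⟨⟨_, hσ.proj hk⟩, fun σ' τ hσ' hτ => ?_⟩
    rw [hτ.unique (hσ'.proj hk)]
    refine execP_proj I d (τ := []) (by simpa using hσ'.1) fun a f l args b hab hb => ?_
    exact Need.fn_of_end (hab ▸ hσ'.1) hb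
  · rintro rfl D I d
    exact ⟨fun ⟨σ, hσ⟩ => ⟨_, hσ.proj hk⟩,
      Terminates.lift hk fun p l args b hb => .ofOmega ⟨args, b, hb⟩⟩

end SchemaSlicing
end
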